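/- arXiv:1710.07183 — 2 statements merged into one kernel-verified Lean document; each statement's English description precedes it below -/
import Mathlib

section
/- Let θ be a sentence in the first-order language of rings and let p be a prime. Then there exist natural numbers N > 0 and B ≥ 1 such that for all e ≥ B, the finite field with p^e elements satisfies θ if and only if the finite field with p^{e+N} elements satisfies θ. -/
namespace FFP

open Module

section curve

variable {F R : Type*} [Field F] [CommRing R] [Algebra F R]

/-- monomials -/
def mon {d : ℕ} (x y : R) (ij : ℕ × Fin d) : R := x ^ ij.1 * y ^ (ij.2 : ℕ)

structure Curve (F : Type*) {R : Type*} [Field F] [CommRing R] [Algebra F R]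
    (x y : R) (d κ : ℕ) : Prop where
  dpos : 0 < d
  li : LinearIndependent F (mon (d := d) x y)
  sp : Submodule.span F (Set.range (mon (d := d) x y)) = ⊤
  red : y ^ d ∈ Submodule.span F {z : R | ∃ i j, j < d ∧ i ≤ κ ∧ z = x ^ i * y ^ j}

/-- The weight filtration. -/
def W (F : Type*) {R : Type*} [Field F] [CommRing R] [Algebra F R] (x y : R) (κ m : ℕ) :
    Submodule F R :=
  Submodule.span F {z : R | ∃ i j, i + κ * j ≤ m ∧ z = x ^ i * y ^ j}

def SS (d κ m : ℕ) : Finset (ℕ × Fin d) :=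
  (Finset.range (m + 1) ×ˢ Finset.univ).filter fun ij => ij.1 + κ * (ij.2 : ℕ) ≤ m

lemma mem_SS {d κ m : ℕ} (ij : ℕ × Fin d) : ij ∈ SS d κ m ↔ ij.1 + κ * (ij.2 : ℕ) ≤ m := by
  simp only [SS, Finset.mem_filter, Finset.mem_product, Finset.mem_range, Finset.mem_univ,
    and_true, and_iff_right_iff_imp]
  intro h
  have := Nat.le_add_right ij.1 (κ * (ij.2 : ℕ))
  omega

lemma card_SS (d κ m : ℕ) : (SS d κ m).card = ∑ j : Fin d, (m + 1 - κ * (j : ℕ)) := by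
  rw [SS, Finset.card_filter, Finset.sum_product_right]
  refine Finset.sum_congr rfl fun j _ => ?_
  rw [← Finset.card_filter]
  have : (Finset.range (m + 1)).filter (fun i => i + κ * (j : ℕ) ≤ m)
      = Finset.range (m + 1 - κ * (j : ℕ)) := by
    ext i
    simp only [Finset.mem_filter, Finset.mem_range]
    omega
  simp [this]

lemma card_SS_le (d κ m : ℕ) : (SS d κ m).card ≤ d * (m + 1) := by
  rw [card_SS]
  calc _ ≤ ∑ j : Fin d, (m + 1) := Finset.sum_le_sum fun j _ => by omega
    _ = _ := by simp

lemma le_card_SS (d κ m : ℕ) : d * (m + 1) ≤ (SS d κ m).card + d * (κ * d) := by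
  rw [card_SS]
  calc d * (m + 1) = ∑ j : Fin d, (m + 1) := by simp
    _ ≤ ∑ j : Fin d, ((m + 1 - κ * (j : ℕ)) + κ * d) := Finset.sum_le_sum fun j _ => by
        have : κ * (j : ℕ) ≤ κ * d := Nat.mul_le_mul_left _ j.2.le
        omega
    _ = _ := by simp [Finset.sum_add_distrib]

lemma card_SS_add (d κ m w : ℕ) (h : κ * d ≤ m) :
    (SS d κ (m + w)).card = (SS d κ m).card + d * w := by
  rw [card_SS, card_SS]
  have : ∀ j : Fin d, m + w + 1 - κ * (j : ℕ) = (m + 1 - κ * (j : ℕ)) + w := fun j => by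
    have : κ * (j : ℕ) ≤ κ * d := Nat.mul_le_mul_left _ j.2.le
    omega
  simp [this, Finset.sum_add_distrib]

variable {x y : R} {d κ : ℕ}

lemma mem_W {i j m : ℕ} (h : i + κ * j ≤ m) : x ^ i * y ^ j ∈ W F x y κ m :=
  Submodule.subset_span ⟨i, j, h, rfl⟩

lemma W_mono {m n : ℕ} (h : m ≤ n) : W F x y κ m ≤ W F x y κ n :=
  Submodule.span_mono fun _ ⟨i, j, h', e⟩ => ⟨i, j, h'.trans h, e⟩

lemma W_mul {m n : ℕ} {a b : R} (ha : a ∈ W F x y κ m) (hb : b ∈ W F x y κ n) :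
    a * b ∈ W F x y κ (m + n) := by
  have := Submodule.mul_mem_mul ha hb
  rw [W, W, Submodule.span_mul_span] at this
  refine Submodule.span_mono ?_ this
  rintro _ ⟨_, ⟨i, j, h, rfl⟩, _, ⟨i', j', h', rfl⟩, rfl⟩
  exact ⟨i + i', j + j', by linarith [mul_add κ j j'], by simp only; ring⟩

lemma W_one {m : ℕ} : (1 : R) ∈ W F x y κ m := by
  simpa using mem_W (F := F) (x := x) (y := y) (i := 0) (j := 0) (m := m) (κ := κ) (by simp)

lemma W_pow {m : ℕ} {a : R} (ha : a ∈ W F x y κ m) (n : ℕ) : a ^ n ∈ W F x y κ (n * m) := by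
  induction n with
  | zero => simpa using W_one
  | succ n ih => rw [pow_succ, add_mul, one_mul]; exact W_mul ih ha

namespace Curve


lemma mem_aux (C : Curve F x y d κ) (m : ℕ) : ∀ j i, i + κ * j ≤ m →
    x ^ i * y ^ j ∈ Submodule.span F ((mon (d := d) x y) '' (SS d κ m)) := by
  intro j
  induction j using Nat.strong_induction_on with
  | _ j ih =>
  intro i hi
  by_cases hj : j < d
  · exact Submodule.subset_span ⟨(i, ⟨j, hj⟩), (mem_SS _).2 hi, rfl⟩
  · push Not at hj
    obtain ⟨k, rfl⟩ := Nat.exists_eq_add_of_le hj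
    have key : ∀ z ∈ Submodule.span F {z : R | ∃ i j, j < d ∧ i ≤ κ ∧ z = x ^ i * y ^ j},
        x ^ i * y ^ k * z ∈ Submodule.span F ((mon (d := d) x y) '' (SS d κ m)) := by
      intro z hz
      induction hz using Submodule.span_induction with
      | mem z hz =>
        obtain ⟨i', j', hj', hi', rfl⟩ := hz
        have := ih (k + j') (by omega) (i + i') (by
          have h1 : κ * (k + j') + κ ≤ κ * (d + k) := by
            rw [← Nat.mul_succ]; exact Nat.mul_le_mul_left _ (by omega)
          omega)
        convert this using 1; ring
      | zero => simp
      | add a b _ _ ha hb => rw [mul_add]; exact Submodule.add_mem _ ha hb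
      | smul c a _ ha => rw [mul_smul_comm]; exact Submodule.smul_mem _ c ha
    have := key _ C.red
    convert this using 1; ring

lemma W_eq (C : Curve F x y d κ) (m : ℕ) : W F x y κ m = Submodule.span F ((mon (d := d) x y) '' (SS d κ m)) := by
  apply le_antisymm
  · refine Submodule.span_le.2 ?_
    rintro _ ⟨i, j, h, rfl⟩
    exact C.mem_aux m j i h
  · refine Submodule.span_mono ?_
    rintro _ ⟨ij, h, rfl⟩
    exact ⟨ij.1, ij.2, (mem_SS _).1 h, rfl⟩

lemma liS (C : Curve F x y d κ) (m : ℕ) : LinearIndependent F (fun ij : SS d κ m => mon x y (ij : ℕ × Fin d)) :=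
  C.li.comp _ Subtype.val_injective

lemma W_eq' (C : Curve F x y d κ) (m : ℕ) : W F x y κ m =
    Submodule.span F (Set.range (fun ij : SS d κ m => mon x y (ij : ℕ × Fin d))) := by
  rw [C.W_eq]; congr 1; ext; simp

lemma finrank_W (C : Curve F x y d κ) (m : ℕ) : finrank F (W F x y κ m) = (SS d κ m).card := by
  rw [C.W_eq', finrank_span_eq_card (C.liS m)]; simp

lemma finite_W (C : Curve F x y d κ) (m : ℕ) : Module.Finite F (W F x y κ m) := by
  rw [C.W_eq']
  exact Module.Finite.iff_fg.2 (Submodule.fg_span (Set.finite_range _))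

lemma exists_mem_W (C : Curve F x y d κ) (r : R) : ∃ m, r ∈ W F x y κ m := by
  have : r ∈ Submodule.span F (Set.range (mon (d := d) x y)) := by rw [C.sp]; trivial
  induction this using Submodule.span_induction with
  | mem z hz => obtain ⟨ij, rfl⟩ := hz; exact ⟨_, mem_W le_rfl⟩
  | zero => exact ⟨0, zero_mem _⟩
  | add a b _ _ ha hb =>
    obtain ⟨m, hm⟩ := ha; obtain ⟨n, hn⟩ := hb
    exact ⟨m + n, add_mem (W_mono (by omega) hm) (W_mono (by omega) hn)⟩
  | smul c a _ ha => obtain ⟨m, hm⟩ := ha; exact ⟨m, Submodule.smul_mem _ _ hm⟩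

lemma bound (C : Curve F x y d κ) [IsDomain R] {r : R} {w : ℕ} (hr : r ∈ W F x y κ w) (h0 : r ≠ 0)
    {V : Type*} [AddCommGroup V] [Module F V] [Module.Finite F V] (L : R →ₗ[F] V)
    (hL : Function.Surjective L) (hk : ∀ s, L (r * s) = 0) : finrank F V ≤ d * w := by
  let b := Module.finBasis F V
  choose g hg using fun i => hL (b i)
  choose M hM using fun i => C.exists_mem_W (g i)
  obtain ⟨M0, hMd⟩ : ∃ M0, M0 = ∑ i, M i + κ * d := ⟨_, rfl⟩
  have hM0 : ∀ i, M i ≤ M0 := fun i =>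
    (Finset.single_le_sum (fun _ _ => Nat.zero_le _) (Finset.mem_univ i)).trans
      (hMd ▸ Nat.le_add_right _ _)
  have := C.finite_W (M0 + w)
  have := C.finite_W M0
  let L' : W F x y κ (M0 + w) →ₗ[F] V := L.domRestrict _
  have hL' : LinearMap.range L' = ⊤ := by
    rw [eq_top_iff, ← b.span_eq, Submodule.span_le]
    rintro _ ⟨i, rfl⟩
    exact ⟨⟨g i, W_mono ((hM0 i).trans (Nat.le_add_right _ _)) (hM i)⟩, hg i⟩
  let mul : W F x y κ M0 →ₗ[F] LinearMap.ker L' :=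
    { toFun := fun s => ⟨⟨r * s, by rw [add_comm]; exact W_mul hr s.2⟩, hk s⟩
      map_add' := fun s t => by ext; simp [mul_add]
      map_smul' := fun c s => by ext; simp }
  have hmul : Function.Injective mul := by
    intro s t hst
    have : r * (s : R) = r * t := congrArg (fun z : LinearMap.ker L' => ((z : W F x y κ (M0 + w)) : R)) hst
    exact Subtype.ext (mul_left_cancel₀ h0 this)
  have h1 := LinearMap.finrank_le_finrank_of_injective hmul
  have h2 := LinearMap.finrank_range_add_finrank_ker L'
  rw [hL', finrank_top, C.finrank_W, card_SS_add _ _ _ _ (hMd ▸ Nat.le_add_left _ _)] at h2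
  rw [C.finrank_W] at h1
  omega

lemma point_bound (C : Curve F x y d κ) [IsDomain R] {r : R} {w : ℕ} (hr : r ∈ W F x y κ w) (h0 : r ≠ 0)
    (P : Finset (R →ₐ[F] F)) (hP : ∀ φ ∈ P, φ r = 0) : P.card ≤ d * w := by
  classical
  let L : R →ₗ[F] (P → F) := LinearMap.pi fun φ => φ.1.toLinearMap
  have := C.bound hr h0 L ?_ ?_
  · simpa using this
  · rw [← LinearMap.range_eq_top]
    by_contra hne
    obtain ⟨f, hf, hle⟩ := Submodule.exists_le_ker_of_lt_top _ (lt_top_iff_ne_top.2 hne)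
    apply hf
    have hli : LinearIndependent F (fun φ : P => ((φ.1 : R →* F) : R → F)) :=
      (linearIndependent_monoidHom R F).comp (fun φ : P => (φ.1 : R →* F)) (by
        intro a b hab
        apply Subtype.ext
        ext z
        exact DFunLike.congr_fun hab z)
    rw [Fintype.linearIndependent_iff] at hli
    have h1 := hli (fun φ => f (Pi.single φ 1)) (by
      ext s
      have : L s ∈ LinearMap.ker f := hle ⟨s, rfl⟩
      rw [LinearMap.mem_ker, LinearMap.pi_apply_eq_sum_univ] at this
      simp only [Finset.sum_apply, Pi.smul_apply, Pi.zero_apply]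
      rw [← this]
      refine Finset.sum_congr rfl fun φ _ => ?_
      simp only [smul_eq_mul, L, mul_comm]
      congr 1
      congr 1
      ext z
      simp [Pi.single_apply, eq_comm])
    refine LinearMap.pi_ext' fun φ => LinearMap.ext_ring ?_
    simpa using h1 φ
  · intro s
    ext φ
    simp [L, hP φ.1 φ.2]

lemma ps_bound (C : Curve F x y d κ) [IsDomain R] {r : R} {w : ℕ} (hr : r ∈ W F x y κ w) (h0 : r ≠ 0)
    (ψ : R →ₐ[F] PowerSeries F) (a : F) (hψ : ψ x = PowerSeries.C a + PowerSeries.X) (n : ℕ)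
    (hn : PowerSeries.X ^ n ∣ ψ r) : n ≤ d * w := by
  let L : R →ₗ[F] (Fin n → F) :=
    LinearMap.pi fun i => (PowerSeries.coeff (i : ℕ)).comp ψ.toLinearMap
  have := C.bound hr h0 L ?_ ?_
  · simpa using this
  · rw [← LinearMap.range_eq_top, eq_top_iff, ← (Pi.basisFun F (Fin n)).span_eq,
      Submodule.span_le]
    rintro _ ⟨i, rfl⟩
    refine ⟨(x - algebraMap F R a) ^ (i : ℕ), ?_⟩
    ext j
    have : ψ (x - algebraMap F R a) = PowerSeries.X := by
      rw [map_sub, hψ, AlgHom.commutes]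
      simp
    simp only [L, LinearMap.pi_apply, LinearMap.comp_apply, AlgHom.toLinearMap_apply, map_pow,
      this, PowerSeries.coeff_X_pow, Pi.basisFun_apply, Pi.single_apply, Fin.ext_iff]
  · intro s
    ext j
    have : PowerSeries.X ^ n ∣ ψ (r * s) := by rw [map_mul]; exact hn.mul_right _
    exact PowerSeries.X_pow_dvd_iff.1 this j j.2

end Curve
end curve
end FFP

namespace FFP

open Module

lemma ps_indep {F : Type*} [Field F] {p : ℕ} [Fact p.Prime] [CharP F p] (k : ℕ)
    {ι : Type*} [Fintype ι] (E U : ι → PowerSeries F)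
    (hE : ∀ γ : ι → F, PowerSeries.X ^ (p ^ k) ∣ ∑ i, γ i • E i → γ = 0)
    (h : ∑ i, E i * U i ^ (p ^ k) = 0) (i : ι) : U i = 0 := by
  have : CharP (PowerSeries F) p :=
    charP_of_injective_algebraMap (algebraMap F (PowerSeries F)).injective p
  have key : ∀ n, ∀ i, PowerSeries.X ^ n ∣ U i := by
    intro n
    induction n with
    | zero => simp
    | succ n ih =>
      choose w hw using ih
      have h1 : ∑ i, E i * w i ^ (p ^ k) = 0 := by
        have : (PowerSeries.X ^ n) ^ (p ^ k) * ∑ i, E i * w i ^ (p ^ k) = 0 := by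
          rw [← h, Finset.mul_sum]
          refine Finset.sum_congr rfl fun i _ => ?_
          rw [hw i]; ring
        exact (mul_eq_zero.1 this).resolve_left
          (pow_ne_zero _ (pow_ne_zero _ PowerSeries.X_ne_zero))
      have h2 : ∀ i, ∃ v, w i = PowerSeries.C (PowerSeries.constantCoeff (w i)) +
          PowerSeries.X * v := by
        intro i
        have : PowerSeries.X ∣ w i - PowerSeries.C (PowerSeries.constantCoeff (w i)) := by
          rw [PowerSeries.X_dvd_iff]; simp
        obtain ⟨v, hv⟩ := this
        exact ⟨v, by rw [← hv]; ring⟩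
      choose v hv using h2
      have h3 := hE (fun i => PowerSeries.constantCoeff (w i) ^ (p ^ k)) (by
        refine ⟨-∑ i, E i * v i ^ (p ^ k), ?_⟩
        rw [mul_neg, eq_neg_iff_add_eq_zero, Finset.mul_sum, ← Finset.sum_add_distrib, ← h1]
        refine Finset.sum_congr rfl fun i _ => ?_
        conv_rhs => rw [hv i, add_pow_char_pow]
        rw [PowerSeries.smul_eq_C_mul, map_pow]
        ring)
      intro i
      have h4 : PowerSeries.constantCoeff (w i) = 0 :=
        eq_zero_of_pow_eq_zero (congrFun h3 i)
      obtain ⟨u, hu⟩ := PowerSeries.X_dvd_iff.2 h4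
      exact ⟨u, by rw [hw i, hu]; ring⟩
  ext n
  exact PowerSeries.X_pow_dvd_iff.1 (key (n + 1) i) n (Nat.lt_succ_self n)

namespace Curve

variable {F R : Type*} [Field F] [CommRing R] [Algebra F R] {x y : R} {d κ : ℕ}

/-- The Stepanov-Bombieri upper bound. -/
theorem stepanov [IsAlgClosed F] [IsDomain R] {p : ℕ} [Fact p.Prime] [CharP F p]
    (C : Curve F x y d κ)
    (ψ : R →ₐ[F] PowerSeries F) (a : F) (hψ : ψ x = PowerSeries.C a + PowerSeries.X)
    (μ k l m δ : ℕ) {h D : R} (hh : h ∈ W F x y κ δ) (hD : D ∈ W F x y κ δ)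
    (hcard : (SS d κ (p ^ μ * l + (m + d * δ))).card < (SS d κ l).card * (SS d κ m).card)
    (hl : d * l < p ^ k)
    (P : Finset (R →ₐ[F] F)) (hPx : ∀ φ ∈ P, φ x ^ p ^ (k + μ) = φ x)
    (hPD : ∀ φ ∈ P, φ D ≠ 0) (hPy : ∀ φ ∈ P, φ D * φ y ^ p ^ (k + μ) = φ h) :
    P.card ≤ d * (l + p ^ k * m) := by
  have hp : p.Prime := Fact.out
  have : CharP R p := charP_of_injective_algebraMap (algebraMap F R).injective p
  let I := SS d κ l
  let J := SS d κ m
  let tw : ℕ × Fin d → R := fun ij => D ^ (d - 1 - (ij.2 : ℕ)) * h ^ (ij.2 : ℕ) * x ^ ij.1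
  have htw : ∀ ij ∈ J, tw ij ∈ W F x y κ (m + d * δ) := by
    intro ij hij
    rw [mem_SS] at hij
    have hj := ij.2.2
    have hx : x ^ ij.1 ∈ W F x y κ m := by
      simpa using mem_W (F := F) (x := x) (y := y) (i := ij.1) (j := 0) (κ := κ) (m := m)
        (by have := Nat.le_add_right ij.1 (κ * (ij.2 : ℕ)); omega)
    refine W_mono ?_ (W_mul (W_mul (W_pow hD _) (W_pow hh _)) hx)
    have : (d - 1 - (ij.2 : ℕ)) * δ + (ij.2 : ℕ) * δ ≤ d * δ := by
      rw [← add_mul]; exact Nat.mul_le_mul_right _ (by omega)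
    omega
  let Φ : (I × J → F) →ₗ[F] W F x y κ (p ^ μ * l + (m + d * δ)) :=
    ∑ ij : I × J, (LinearMap.proj ij).smulRight
      (⟨mon x y ij.1.1 ^ (p ^ μ) * tw ij.2.1,
        W_mul (W_pow (mem_W ((mem_SS _).1 ij.1.2)) _) (htw _ ij.2.2)⟩ :
          W F x y κ (p ^ μ * l + (m + d * δ)))
  have hΦ : ∀ c, ((Φ c : W F x y κ _) : R) =
      ∑ ij : I × J, c ij • (mon x y ij.1.1 ^ (p ^ μ) * tw ij.2.1) := by
    intro c
    simp [Φ, LinearMap.sum_apply]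
  have := C.finite_W (p ^ μ * l + (m + d * δ))
  have hker : LinearMap.ker Φ ≠ ⊥ := by
    apply LinearMap.ker_ne_bot_of_finrank_lt
    rw [C.finrank_W]
    simpa [I, J] using hcard
  obtain ⟨c', hc', hc'0⟩ := Submodule.exists_mem_ne_zero_of_ne_bot hker
  choose c hc using fun ij => IsAlgClosed.exists_pow_nat_eq (c' ij) (pow_pos hp.pos μ)
  choose c1 hc1 using fun ij => IsAlgClosed.exists_pow_nat_eq (c ij) (pow_pos hp.pos k)
  let r : R := ∑ ij : I × J, c ij • (mon x y ij.1.1 * mon x y ij.2.1 ^ (p ^ k))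
  have hrW : r ∈ W F x y κ (l + p ^ k * m) :=
    Submodule.sum_mem _ fun ij _ => Submodule.smul_mem _ _
      (W_mul (mem_W ((mem_SS _).1 ij.1.2)) (W_pow (mem_W ((mem_SS _).1 ij.2.2)) _))
  -- nonvanishing
  have hinj : ∀ s : R, ψ s = 0 → s = 0 := by
    intro s hs
    by_contra h0
    obtain ⟨w, hw⟩ := C.exists_mem_W s
    have := C.ps_bound hw h0 ψ a hψ (d * w + 1) (by rw [hs]; exact dvd_zero _)
    omega
  have hr0 : r ≠ 0 := by
    intro hr
    let u : I → R := fun i => ∑ j : J, c1 (i, j) • mon x y j.1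
    have hru : r = ∑ i : I, mon x y i.1 * u i ^ (p ^ k) := by
      simp only [r, u, Fintype.sum_prod_type]
      refine Finset.sum_congr rfl fun i _ => ?_
      rw [sum_pow_char_pow, Finset.mul_sum]
      refine Finset.sum_congr rfl fun j _ => ?_
      rw [smul_pow, hc1, mul_smul_comm]
    have hu : ∀ i, ψ (u i) = 0 := by
      refine ps_indep (p := p) k (fun i : I => ψ (mon x y i.1)) (fun i => ψ (u i)) ?_ ?_
      · intro γ hγ
        have hs : ∑ i : I, γ i • mon x y i.1 = 0 := by
          by_contra h0
          have := C.ps_bound (w := l) (r := ∑ i : I, γ i • mon x y i.1)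
            (Submodule.sum_mem _ fun i _ => Submodule.smul_mem _ _
              (mem_W ((mem_SS _).1 i.2))) h0 ψ a hψ (p ^ k) (by simpa using hγ)
          omega
        ext i
        exact Fintype.linearIndependent_iff.1 (C.liS l) γ hs i
      · have := congrArg ψ hru
        rw [hr, map_zero, map_sum] at this
        rw [this]
        simp
    apply hc'0
    ext ⟨i, j⟩
    have h1 := hinj _ (hu i)
    have h2 := Fintype.linearIndependent_iff.1 (C.liS m) (fun j => c1 (i, j)) h1 j
    rw [← hc, ← hc1]
    simp [h2, hp.ne_zero]
  refine C.point_bound hrW hr0 P fun φ hφ => ?_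
  have e1 : φ D ^ (d - 1) * φ r ^ (p ^ μ) = φ ((Φ c' : W F x y κ _) : R) := by
    rw [hΦ, map_sum, map_sum, sum_pow_char_pow, Finset.mul_sum]
    refine Finset.sum_congr rfl fun ij _ => ?_
    have hj := ij.2.1.2.2
    simp only [map_smul, smul_eq_mul, map_mul, map_pow, tw, mul_pow, hc, mon]
    have e2 : φ D ^ (d - 1) =
        φ D ^ (d - 1 - (ij.2.1.2 : ℕ)) * φ D ^ (ij.2.1.2 : ℕ) := by
      rw [← pow_add]; congr 1; omega
    have e3 : ((φ x ^ ij.2.1.1) ^ p ^ k) ^ p ^ μ = φ x ^ ij.2.1.1 := by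
      rw [← pow_mul, ← pow_mul, ← pow_add, mul_comm, pow_mul, hPx φ hφ]
    have e4 : φ D ^ (ij.2.1.2 : ℕ) * ((φ y ^ (ij.2.1.2 : ℕ)) ^ p ^ k) ^ p ^ μ =
        φ h ^ (ij.2.1.2 : ℕ) := by
      rw [← hPy φ hφ, mul_pow, ← pow_mul, ← pow_mul, ← pow_mul, ← pow_add]
      congr 2
      ring
    rw [e2, e3, ← e4]
    ring
  rw [LinearMap.mem_ker] at hc'
  rw [hc', ZeroMemClass.coe_zero, map_zero] at e1
  have := (mul_eq_zero.1 e1).resolve_left (pow_ne_zero _ (hPD φ hφ))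
  exact eq_zero_of_pow_eq_zero this

end Curve
end FFP

namespace FFP

open Module Polynomial

/-- evaluation of a bivariate polynomial at `(a, b)` -/
noncomputable def ev {F : Type*} [CommRing F] (a b : F) : F[X][X] →+* F :=
  eval₂RingHom (evalRingHom a) b

section
variable {F : Type*} [Field F] {f : F[X][X]}

noncomputable abbrev xx (f : F[X][X]) : AdjoinRoot f := AdjoinRoot.of f X
noncomputable abbrev yy (f : F[X][X]) : AdjoinRoot f := AdjoinRoot.root f

lemma mk_eq (f g : F[X][X]) : AdjoinRoot.mk f g =
    ∑ j ∈ Finset.range (g.natDegree + 1), ∑ i ∈ Finset.range ((g.coeff j).natDegree + 1),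
      (g.coeff j).coeff i • (xx f ^ i * yy f ^ j) := by
  conv_lhs => rw [g.as_sum_range_C_mul_X_pow]
  rw [map_sum]
  refine Finset.sum_congr rfl fun j _ => ?_
  rw [map_mul, map_pow, AdjoinRoot.mk_X, AdjoinRoot.mk_C]
  conv_lhs => rw [(g.coeff j).as_sum_range_C_mul_X_pow]
  rw [map_sum, Finset.sum_mul]
  refine Finset.sum_congr rfl fun i _ => ?_
  rw [map_mul, map_pow, Algebra.smul_def, mul_assoc]
  rfl

lemma mk_mem_W (g : F[X][X]) (κ n δ : ℕ) (hn : g.natDegree ≤ n)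
    (hδ : ∀ j, (g.coeff j).natDegree ≤ δ) : AdjoinRoot.mk f g ∈ W F (xx f) (yy f) κ (δ + κ * n) := by
  rw [mk_eq]
  refine Submodule.sum_mem _ fun j hj => Submodule.sum_mem _ fun i hi =>
    Submodule.smul_mem _ _ (mem_W ?_)
  rw [Finset.mem_range] at hi hj
  have := hδ j
  exact Nat.add_le_add (by omega) (Nat.mul_le_mul_left _ (by omega))

lemma curve (hm : f.Monic) (hd : 0 < f.natDegree) (κ : ℕ) (hκ : ∀ j, (f.coeff j).natDegree ≤ κ) :
    Curve F (xx f) (yy f) f.natDegree κ := by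
  let B := (basisMonomials F).smulTower (AdjoinRoot.powerBasisAux' hm)
  have hB : (B : ℕ × Fin f.natDegree → AdjoinRoot f) = mon (xx f) (yy f) := by
    ext ij
    have h2 : AdjoinRoot.powerBasisAux' hm ij.2 = yy f ^ (ij.2 : ℕ) := by
      rw [← Basis.repr_symm_single_one, AdjoinRoot.powerBasisAux'_repr_symm_apply]
      rw [Finset.sum_eq_single ij.2]
      · simp [monomial_one_right_eq_X_pow]
      · intro b _ hb
        rw [Finsupp.single_eq_of_ne hb, map_zero]
      · simp
    simp only [B, Basis.smulTower_apply, h2, mon, coe_basisMonomials,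
      monomial_one_right_eq_X_pow, Algebra.smul_def, map_pow]
    rfl
  refine ⟨hd, hB ▸ B.linearIndependent, hB ▸ B.span_eq, ?_⟩
  have h1 : AdjoinRoot.mk f f = 0 := AdjoinRoot.mk_self
  have h2 : yy f ^ f.natDegree = - AdjoinRoot.mk f
      (∑ i ∈ Finset.range f.natDegree, C (f.coeff i) * X ^ i) := by
    rw [eq_neg_iff_add_eq_zero]
    have h3 := congrArg (AdjoinRoot.mk f) hm.as_sum
    rw [h1, map_add, map_pow, AdjoinRoot.mk_X] at h3
    exact h3.symm
  rw [h2]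
  refine Submodule.neg_mem _ ?_
  rw [map_sum]
  refine Submodule.sum_mem _ fun j hj => ?_
  rw [map_mul, map_pow, AdjoinRoot.mk_X, AdjoinRoot.mk_C]
  rw [(f.coeff j).as_sum_range_C_mul_X_pow, map_sum, Finset.sum_mul]
  refine Submodule.sum_mem _ fun i hi => ?_
  have : AdjoinRoot.of f (C ((f.coeff j).coeff i) * X ^ i) * AdjoinRoot.root f ^ j =
      (f.coeff j).coeff i • (xx f ^ i * yy f ^ j) := by
    rw [map_mul, map_pow, Algebra.smul_def, mul_assoc]
    rfl
  rw [this]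
  refine Submodule.smul_mem _ _ (Submodule.subset_span ⟨i, j, Finset.mem_range.1 hj, ?_, rfl⟩)
  have := hκ j
  rw [Finset.mem_range] at hi
  omega

/-- the point of the curve -/
noncomputable def pt (a b : F) (h : ev a b f = 0) : AdjoinRoot f →ₐ[F] F :=
  AdjoinRoot.liftAlgHom f (aeval a) b (by rw [coe_aeval_eq_evalRingHom]; exact h)

lemma pt_mk (a b : F) (h : ev a b f = 0) (g : F[X][X]) : pt a b h (AdjoinRoot.mk f g) = ev a b g := by
  rw [pt, AdjoinRoot.liftAlgHom_mk, coe_aeval_eq_evalRingHom]; rfl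

@[simp] lemma pt_xx (a b : F) (h : ev a b f = 0) : pt a b h (xx f) = a := by
  rw [pt, AdjoinRoot.liftAlgHom_of]; simp

@[simp] lemma pt_yy (a b : F) (h : ev a b f = 0) : pt a b h (yy f) = b := by
  rw [pt, AdjoinRoot.liftAlgHom_root]

lemma exists_root [IsAlgClosed F] (hm : f.Monic) (hd : 0 < f.natDegree) (a : F) :
    ∃ b, ev a b f = 0 := by
  obtain ⟨b, hb⟩ := IsAlgClosed.exists_root (f.map (evalRingHom a)) (by
    rw [hm.degree_map, degree_eq_natDegree hm.ne_zero]
    exact_mod_cast hd.ne')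
  exact ⟨b, by rw [IsRoot, eval_map] at hb; exact hb⟩

/-- few `a` have a point above with `g = 0`. -/
lemma few_zeros [IsDomain (AdjoinRoot f)] {κ w : ℕ} (C : Curve F (xx f) (yy f) f.natDegree κ)
    {g : F[X][X]} (hg : AdjoinRoot.mk f g ∈ W F (xx f) (yy f) κ w) (h0 : AdjoinRoot.mk f g ≠ 0)
    (S : Finset F) (hS : ∀ a ∈ S, ∃ b, ev a b f = 0 ∧ ev a b g = 0) :
    S.card ≤ f.natDegree * w := by
  classical
  choose! b hb using hS
  let P : S → (AdjoinRoot f →ₐ[F] F) := fun a => pt a.1 (b a.1) (hb a.1 a.2).1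
  have hP : Function.Injective P := by
    intro a a' h
    have := DFunLike.congr_fun h (xx f)
    simp only [P, pt_xx] at this
    exact Subtype.ext this
  have := C.point_bound hg h0 (Finset.univ.image P) (by
    intro φ hφ
    obtain ⟨a, -, rfl⟩ := Finset.mem_image.1 hφ
    rw [pt_mk]
    exact (hb a.1 a.2).2)
  rw [Finset.card_image_of_injective _ hP] at this
  simpa using this

lemma exists_ps (hm : f.Monic) (a b : F) (h : ev a b f = 0) (h' : ev a b (derivative f) ≠ 0) :
    ∃ ψ : AdjoinRoot f →ₐ[F] PowerSeries F, ψ (xx f) = PowerSeries.C a + PowerSeries.X := by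
  let θ : F[X] →ₐ[F] PowerSeries F := aeval (PowerSeries.C a + PowerSeries.X)
  have hθ : (PowerSeries.constantCoeff (R := F)).comp (θ : F[X] →+* PowerSeries F)
      = evalRingHom a := by
    ext
    · simp [θ]
    · simp [θ]
  have hc : ∀ g : F[X][X], PowerSeries.constantCoeff
      (eval (PowerSeries.C b) (g.map (θ : F[X] →+* PowerSeries F))) = ev a b g := by
    intro g
    rw [eval_map, hom_eval₂, hθ]
    simp [ev]
  obtain ⟨z, hz, -⟩ := HenselianRing.is_henselian (I := Ideal.span {(PowerSeries.X : PowerSeries F)})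
    (f.map (θ : F[X] →+* PowerSeries F)) (hm.map _) (PowerSeries.C b)
    (by rw [Ideal.mem_span_singleton, PowerSeries.X_dvd_iff, hc, h])
    (by
      apply IsUnit.map
      rw [derivative_map, PowerSeries.isUnit_iff_constantCoeff, hc]
      exact isUnit_iff_ne_zero.2 h')
  refine ⟨AdjoinRoot.liftAlgHom f θ z ?_, ?_⟩
  · rw [IsRoot, eval_map] at hz; exact hz
  · rw [AdjoinRoot.liftAlgHom_of]; simp [θ]

lemma card_fixed [IsAlgClosed F] {p : ℕ} [Fact p.Prime] [CharP F p] {e : ℕ} (he : 0 < e) :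
    ∃ S : Finset F, S.card = p ^ e ∧ ∀ a, a ∈ S ↔ a ^ p ^ e = a := by
  classical
  have hp : p.Prime := Fact.out
  have h1 : 1 < p ^ e := Nat.one_lt_pow he.ne' hp.one_lt
  have hne : (X ^ p ^ e - X : F[X]) ≠ 0 := FiniteField.X_pow_card_sub_X_ne_zero F h1
  refine ⟨(X ^ p ^ e - X : F[X]).roots.toFinset, ?_, ?_⟩
  · have hs := galois_poly_separable (K := F) p (p ^ e) (dvd_pow_self p he.ne')
    rw [Multiset.toFinset_card_of_nodup (nodup_roots hs),
      ← (IsAlgClosed.splits (X ^ p ^ e - X : F[X])).natDegree_eq_card_roots,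
      FiniteField.X_pow_card_sub_X_natDegree_eq F h1]
  · intro a
    rw [Multiset.mem_toFinset, mem_roots hne]
    simp [sub_eq_zero]

lemma card_roots [IsAlgClosed F] (hm : f.Monic) (a : F)
    (h : ∀ b, ev a b f = 0 → ev a b (derivative f) ≠ 0) :
    ∃ S : Finset F, S.card = f.natDegree ∧ ∀ b, b ∈ S ↔ ev a b f = 0 := by
  classical
  have hmm : (f.map (evalRingHom a)).Monic := hm.map _
  have hev : ∀ b g, eval b (g.map (evalRingHom a)) = ev a b g := fun b g => by
    rw [eval_map]; rfl
  have hnd : (f.map (evalRingHom a)).roots.Nodup := by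
    rw [Multiset.nodup_iff_count_le_one]
    intro b
    rw [count_roots]
    by_contra hlt
    push Not at hlt
    have := (one_lt_rootMultiplicity_iff_isRoot hmm.ne_zero).1 hlt
    simp only [IsRoot, derivative_map, hev] at this
    exact h b this.1 this.2
  refine ⟨(f.map (evalRingHom a)).roots.toFinset, ?_, ?_⟩
  · rw [Multiset.toFinset_card_of_nodup hnd,
      ← (IsAlgClosed.splits _).natDegree_eq_card_roots, hm.natDegree_map]
  · intro b
    rw [Multiset.mem_toFinset, mem_roots hmm.ne_zero, IsRoot, hev]

end
end FFP

namespace FFP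

open Module Polynomial

lemma numerics (d c1 δ1 t Q m l : ℕ) (hd : 0 < d)
    (hl : l = (c1 + 1) * t + (2 + 2 * c1 + d * d * δ1))
    (hm2 : d * m ≤ t + 1 + c1) (A B : ℕ) (hA : d * (l + 1) ≤ A + c1)
    (hB : t + 1 ≤ B) : d * (t * l + (m + d * δ1) + 1) < A * B := by
  have h1 : A * (t + 1) ≤ A * B := Nat.mul_le_mul_left _ hB
  have h2 : d * (l + 1) * t ≤ (A + c1) * t := Nat.mul_le_mul_right _ hA
  have h3 : l ≤ d * l := Nat.le_mul_of_pos_left _ hd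
  have h4 : A + c1 ≥ l + d := by nlinarith
  nlinarith

theorem final_num (d t Q m l c1 c3 g : ℕ) (hd : 0 < d) (hsum : g * d ≤ (d - 1) * (d * (l + Q * m)))
    (hG : Q * t ≤ g + c3) (hm2 : d * m ≤ t + 1 + c1) (hdl : d * l < Q) (hQ1 : 1 ≤ Q)
    (ht : d * c3 + d * (2 + c1) < t) : False := by
  obtain ⟨d', rfl⟩ : ∃ d', d = d' + 1 := ⟨d - 1, by omega⟩
  rw [Nat.add_sub_cancel] at hsum
  have h1 : (d' + 1) * (l + Q * m) ≤ Q * (t + (2 + c1)) := by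
    have : Q * ((d' + 1) * m) ≤ Q * (t + 1 + c1) := Nat.mul_le_mul_left _ hm2
    nlinarith
  have h2 : d' * ((d' + 1) * (l + Q * m)) ≤ d' * (Q * (t + (2 + c1))) := Nat.mul_le_mul_left _ h1
  have h3 : Q * t * (d' + 1) ≤ (g + c3) * (d' + 1) := Nat.mul_le_mul_right _ hG
  have h4 : Q * t ≤ (d' + 1) * c3 + d' * (Q * (2 + c1)) := by nlinarith
  have h5 : (d' + 1) * c3 ≤ Q * ((d' + 1) * c3) := Nat.le_mul_of_pos_left _ hQ1
  have h6 : Q * t ≤ Q * ((d' + 1) * c3 + d' * (2 + c1)) := by nlinarith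
  have h7 := Nat.le_of_mul_le_mul_left h6 hQ1
  have h8 : d' * (2 + c1) ≤ (d' + 1) * (2 + c1) := Nat.mul_le_mul_right _ (by omega)
  omega

set_option maxHeartbeats 1000000 in
theorem count (p : ℕ) [Fact p.Prime] (F : Type*) [Field F] [IsAlgClosed F] [CharP F p]
    (d κ δ : ℕ) (hd : 0 < d) : ∃ e0 : ℕ, ∀ e ≥ e0, ∀ f : F[X][X], f.Monic → f.natDegree = d →
      Irreducible f → (∀ j, (f.coeff j).natDegree ≤ κ) → derivative f ≠ 0 →
      ∀ D E : F[X], D ≠ 0 → E ≠ 0 → D.natDegree ≤ δ → E.natDegree ≤ δ →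
      ∀ h : Fin d → F[X][X], (∀ i, (h i).natDegree ≤ δ) →
      (∀ i j, ((h i).coeff j).natDegree ≤ δ) →
      (∀ a b, a ^ p ^ e = a → ev a b f = 0 → D.eval a ≠ 0 →
        ∃ i, D.eval a * b ^ p ^ e = ev a b (h i)) →
      ∀ i, ∃ a b, a ^ p ^ e = a ∧ ev a b f = 0 ∧ D.eval a ≠ 0 ∧ E.eval a ≠ 0 ∧
        D.eval a * b ^ p ^ e = ev a b (h i) := by
  classical
  have hp : p.Prime := Fact.out
  obtain ⟨c1, hc1⟩ : ∃ c1, c1 = d * (κ * d) := ⟨_, rfl⟩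
  obtain ⟨δ1, hδ1⟩ : ∃ δ1, δ1 = δ + κ * δ := ⟨_, rfl⟩
  obtain ⟨c2, hc2⟩ : ∃ c2, c2 = 2 + 2 * c1 + d * d * δ1 := ⟨_, rfl⟩
  obtain ⟨c3, hc3⟩ : ∃ c3, c3 = δ + δ + d * (κ + κ * d) := ⟨_, rfl⟩
  obtain ⟨T0, hT0⟩ : ∃ T0, T0 = d * (c1 + 1 + c2) + d * c3 + d * (2 + c1) + 1 := ⟨_, rfl⟩
  refine ⟨3 * (T0 + 1), ?_⟩
  intro e he f hm hfd hirr hκ hder D E hD0 hE0 hDδ hEδ h hh1 hh2 hyp i0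
  obtain ⟨μ, hμ⟩ : ∃ μ, μ = e / 3 := ⟨_, rfl⟩
  obtain ⟨k, hk⟩ : ∃ k, k = e - μ := ⟨_, rfl⟩
  have hek : e = k + μ := by omega
  have hTμ : T0 < μ := by omega
  have hkμ : 2 * μ ≤ k := by omega
  obtain ⟨t, ht⟩ : ∃ t, t = p ^ μ := ⟨_, rfl⟩
  obtain ⟨Q, hQ⟩ : ∃ Q, Q = p ^ k := ⟨_, rfl⟩
  have htT : T0 < t := hTμ.trans (ht ▸ Nat.lt_pow_self hp.one_lt)
  have hQt : t * t ≤ Q := by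
    rw [ht, hQ, ← pow_add]
    exact Nat.pow_le_pow_right hp.pos (by omega)
  have hq : p ^ e = Q * t := by rw [hek, pow_add, hQ, ht]
  obtain ⟨m, hm'⟩ : ∃ m, m = (t + 1 + c1) / d := ⟨_, rfl⟩
  have hm2 : d * m ≤ t + 1 + c1 := hm' ▸ Nat.mul_div_le _ _
  have hm1 : t + 1 + c1 < d * (m + 1) := by
    rw [hm']; exact Nat.lt_mul_div_succ _ hd
  obtain ⟨l, hl⟩ : ∃ l, l = (c1 + 1) * t + c2 := ⟨_, rfl⟩
  have hdl : d * l < Q := by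
    have h1 : d * l ≤ d * (c1 + 1 + c2) * t := by
      rw [hl, mul_assoc]
      refine Nat.mul_le_mul_left _ ?_
      nlinarith
    have h2 : d * (c1 + 1 + c2) < t := by omega
    have h3 : d * (c1 + 1 + c2) * t < t * t := Nat.mul_lt_mul_of_pos_right h2 (by omega)
    omega
  -- the curve
  have : IsDomain (AdjoinRoot f) := AdjoinRoot.isDomain_of_prime hirr.prime
  have Cu := curve hm (hfd ▸ hd) κ hκ
  have hderW : AdjoinRoot.mk f (derivative f) ∈ W F (xx f) (yy f) κ (κ + κ * d) := by
    apply mk_mem_W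
    · exact (natDegree_derivative_le f).trans (by omega)
    · intro j
      rw [coeff_derivative]
      refine natDegree_mul_le.trans ?_
      have : ((j : F[X]) + 1).natDegree = 0 := by
        have : ((j : F[X]) + 1) = ((j + 1 : ℕ) : F[X]) := by push_cast; rfl
        rw [this, natDegree_natCast]
      rw [this, add_zero]
      exact hκ _
  have hder0 : AdjoinRoot.mk f (derivative f) ≠ 0 :=
    AdjoinRoot.mk_ne_zero_of_natDegree_lt hm hder
      (natDegree_derivative_lt (by omega))
  -- a smooth point
  obtain ⟨ψ, a0, hψ⟩ : ∃ (ψ : AdjoinRoot f →ₐ[F] PowerSeries F) (a0 : F),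
      ψ (xx f) = PowerSeries.C a0 + PowerSeries.X := by
    by_contra hne
    have hall : ∀ a b, ev a b f = 0 → ev a b (derivative f) = 0 := by
      intro a b hab
      by_contra h'
      obtain ⟨ψ, hψ⟩ := exists_ps hm a b hab h'
      exact hne ⟨ψ, a, hψ⟩
    have : Infinite F := IsAlgClosed.instInfinite
    obtain ⟨S, hS⟩ := Infinite.exists_subset_card_eq F (f.natDegree * (κ + κ * d) + 1)
    have := few_zeros Cu hderW hder0 S (fun a _ => by
      obtain ⟨b, hb⟩ := exists_root hm (hfd ▸ hd) a
      exact ⟨b, hb, hall a b hb⟩)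
    omega
  -- good `a`
  obtain ⟨S, hScard, hS⟩ := card_fixed (F := F) (p := p) (e := e) (by omega)
  let G := S.filter fun a => D.eval a ≠ 0 ∧ E.eval a ≠ 0 ∧
    ∀ b, ev a b f = 0 → ev a b (derivative f) ≠ 0
  have hG : Q * t ≤ G.card + c3 := by
    have hsub : S ⊆ G ∪ (D.roots.toFinset ∪ E.roots.toFinset ∪
        S.filter fun a => ∃ b, ev a b f = 0 ∧ ev a b (derivative f) = 0) := by
      intro a ha
      simp only [Finset.mem_union, Multiset.mem_toFinset, mem_roots hD0, mem_roots hE0,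
        Finset.mem_filter, ha, true_and, G, IsRoot]
      by_cases h1 : D.eval a = 0
      · simp [h1]
      by_cases h2 : E.eval a = 0
      · simp [h2]
      by_cases h3 : ∃ b, ev a b f = 0 ∧ ev a b (derivative f) = 0
      · exact Or.inr (Or.inr h3)
      · push Not at h3
        exact Or.inl ⟨h1, h2, h3⟩
    have h1 := Finset.card_le_card hsub
    have h2 := Finset.card_union_le G (D.roots.toFinset ∪ E.roots.toFinset ∪
        S.filter fun a => ∃ b, ev a b f = 0 ∧ ev a b (derivative f) = 0)
    have h3 := Finset.card_union_le (D.roots.toFinset ∪ E.roots.toFinset)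
        (S.filter fun a => ∃ b, ev a b f = 0 ∧ ev a b (derivative f) = 0)
    have h4 := Finset.card_union_le D.roots.toFinset E.roots.toFinset
    have h5 := (Multiset.toFinset_card_le D.roots).trans (D.card_roots'.trans hDδ)
    have h6 := (Multiset.toFinset_card_le E.roots).trans (E.card_roots'.trans hEδ)
    have h7 := few_zeros Cu hderW hder0
      (S.filter fun a => ∃ b, ev a b f = 0 ∧ ev a b (derivative f) = 0)
      (fun a ha => (Finset.mem_filter.1 ha).2)
    rw [hfd] at h7
    rw [hScard, hq] at h1
    omega
  have hroots : ∀ a, ∃ s : Finset F, a ∈ G → s.card = f.natDegree ∧ ∀ b, b ∈ s ↔ ev a b f = 0 := by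
    intro a
    by_cases ha : a ∈ G
    · obtain ⟨s, hs⟩ := card_roots hm a (Finset.mem_filter.1 ha).2.2.2
      exact ⟨s, fun _ => hs⟩
    · exact ⟨∅, fun h => absurd h ha⟩
  choose Rt hRt using hroots
  let T : Finset (Σ _ : F, F) := G.sigma Rt
  have hT : T.card = G.card * d := by
    rw [Finset.card_sigma, Finset.sum_congr rfl fun a ha => (hRt a ha).1, Finset.sum_const,
      smul_eq_mul, hfd]
  let Ti : Fin d → Finset (Σ _ : F, F) := fun i =>
    T.filter fun ab => D.eval ab.1 * ab.2 ^ p ^ e = ev ab.1 ab.2 (h i)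
  have hTi : ∀ i, ∀ ab ∈ Ti i, ab.1 ^ p ^ e = ab.1 ∧ D.eval ab.1 ≠ 0 ∧ E.eval ab.1 ≠ 0 ∧
      ev ab.1 ab.2 f = 0 ∧ D.eval ab.1 * ab.2 ^ p ^ e = ev ab.1 ab.2 (h i) := by
    intro i ab hab
    obtain ⟨h1, h2⟩ := Finset.mem_filter.1 hab
    obtain ⟨h3, h4⟩ := Finset.mem_sigma.1 h1
    obtain ⟨h5, h6, h7, -⟩ := Finset.mem_filter.1 h3
    exact ⟨(hS _).1 h5, h6, h7, ((hRt _ h3).2 _).1 h4, h2⟩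
  have hcard : (SS d κ (t * l + (m + d * δ1))).card < (SS d κ l).card * (SS d κ m).card := by
    have h1 := le_card_SS d κ l
    have h2 := le_card_SS d κ m
    have h3 := card_SS_le d κ (t * l + (m + d * δ1))
    rw [← hc1] at h1 h2
    exact lt_of_le_of_lt h3 (numerics d c1 δ1 t Q m l hd (by rw [hl, hc2]) hm2 _ _ h1 (by omega))
  have hDmk : ∀ a b (hab : ev a b f = 0), pt a b hab (AdjoinRoot.mk f (C D)) = D.eval a := by
    intro a b hab
    rw [pt_mk]
    simp [ev]
  have hbound : ∀ i, (Ti i).card ≤ d * (l + Q * m) := by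
    intro i
    let P : Ti i → (AdjoinRoot f →ₐ[F] F) := fun ab => pt ab.1.1 ab.1.2 (hTi i _ ab.2).2.2.2.1
    have hP : Function.Injective P := by
      rintro ⟨⟨a, b⟩, hab⟩ ⟨⟨a', b'⟩, hab'⟩ hh
      have h1 := DFunLike.congr_fun hh (xx f)
      have h2 := DFunLike.congr_fun hh (yy f)
      simp only [P, pt_xx, pt_yy] at h1 h2
      subst h1 h2
      rfl
    have := Cu.stepanov (p := p) ψ a0 hψ μ k l m δ1 (h := AdjoinRoot.mk f (h i))
      (D := AdjoinRoot.mk f (C D))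
      (hδ1 ▸ mk_mem_W _ _ _ _ (hh1 i) (hh2 i))
      (hδ1 ▸ mk_mem_W _ _ _ _ (by simp) (fun j => by
        rw [coeff_C]; split_ifs <;> simp [hDδ]))
      (by rw [hfd, ← ht]; exact hcard) (by rw [hfd, ← hQ]; exact hdl)
      (Finset.univ.image P) ?_ ?_ ?_
    · rw [Finset.card_image_of_injective _ hP] at this
      simpa [hfd, ← hQ] using this
    all_goals
      intro φ hφ
      obtain ⟨ab, -, rfl⟩ := Finset.mem_image.1 hφ
      obtain ⟨h1, h2, h3, h4, h5⟩ := hTi i _ ab.2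
      simp only [P, pt_xx, pt_yy, hDmk, pt_mk, ← hek]
    · exact h1
    · exact h2
    · exact h5
  by_contra hcon
  have hempty : Ti i0 = ∅ := by
    rw [Finset.eq_empty_iff_forall_notMem]
    intro ab hab
    obtain ⟨h1, h2, h3, h4, h5⟩ := hTi i0 _ hab
    exact hcon ⟨ab.1, ab.2, h1, h4, h2, h3, h5⟩
  have hcov : T ⊆ Finset.univ.biUnion Ti := by
    intro ab hab
    obtain ⟨h3, h4⟩ := Finset.mem_sigma.1 hab
    obtain ⟨h5, h6, h7, -⟩ := Finset.mem_filter.1 h3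
    obtain ⟨i, hi⟩ := hyp ab.1 ab.2 ((hS _).1 h5) (((hRt _ h3).2 _).1 h4) h6
    exact Finset.mem_biUnion.2 ⟨i, Finset.mem_univ _, Finset.mem_filter.2 ⟨hab, hi⟩⟩
  have hsum : T.card ≤ (d - 1) * (d * (l + Q * m)) := by
    refine (Finset.card_le_card hcov).trans (Finset.card_biUnion_le.trans ?_)
    rw [← Finset.add_sum_erase _ _ (Finset.mem_univ i0), hempty, Finset.card_empty, zero_add]
    refine (Finset.sum_le_card_nsmul _ _ _ fun i _ => hbound i).trans ?_
    rw [smul_eq_mul, Finset.card_erase_of_mem (Finset.mem_univ i0)]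
    simp
  rw [hT] at hsum
  exact final_num d t Q m l c1 c3 G.card hd hsum hG hm2 hdl
    (by rw [hQ]; exact Nat.one_le_pow _ _ hp.pos) (by omega)

end FFP

namespace FFP

open Module Polynomial Filter

section generic
variable {R S : Type*} [CommRing R] [CommRing S]

/-- coefficientwise map on bivariate polynomials -/
noncomputable def mp (φ : R →+* S) : R[X][X] →+* S[X][X] := mapRingHom (mapRingHom φ)

lemma mp_coeff (φ : R →+* S) (P : R[X][X]) (i j : ℕ) :
    ((mp φ P).coeff i).coeff j = φ ((P.coeff i).coeff j) := by
  simp [mp]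

lemma ev_mp (φ : R →+* S) (a b : R) (P : R[X][X]) :
    ev (φ a) (φ b) (mp φ P) = φ (ev a b P) := by
  have : (ev (φ a) (φ b)).comp (mp φ) = φ.comp (ev a b) := by
    ext <;> simp [ev, mp]
  exact DFunLike.congr_fun this P

lemma mp_comp {T : Type*} [CommRing T] (φ : R →+* S) (ψ : S →+* T) (P : R[X][X]) :
    mp ψ (mp φ P) = mp (ψ.comp φ) P := by
  ext i j; simp [mp_coeff]

lemma ext2 {P Q : R[X][X]} (h : ∀ i j, (P.coeff i).coeff j = (Q.coeff i).coeff j) : P = Q := by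
  ext i j; exact h i j

lemma mp_monic (φ : R →+* S) {P : R[X][X]} (h : P.Monic) : (mp φ P).Monic := by
  exact h.map _

lemma mp_natDegree_monic [Nontrivial S] (φ : R →+* S) {P : R[X][X]} (h : P.Monic) :
    (mp φ P).natDegree = P.natDegree := by
  exact h.natDegree_map _

lemma mp_derivative (φ : R →+* S) (P : R[X][X]) :
    derivative (mp φ P) = mp φ (derivative P) := by
  simp [mp, derivative_map]

lemma mp_surjective (φ : R →+* S) (h : Function.Surjective φ) : Function.Surjective (mp φ) :=
  Polynomial.map_surjective _ (Polynomial.map_surjective _ h)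

lemma exists_monic_lift (φ : R →+* S) (h : Function.Surjective φ) (P : S[X][X]) (hP : P.Monic) :
    ∃ Q : R[X][X], mp φ Q = P ∧ Q.natDegree = P.natDegree ∧ Q.Monic := by
  apply lifts_and_natDegree_eq_and_monic _ hP
  obtain ⟨Q, hQ⟩ := mp_surjective φ h P
  exact (Polynomial.mem_lifts _).2 ⟨Q, hQ⟩

lemma exists_deg_bound (P : R[X][X]) :
    ∃ δ, P.natDegree ≤ δ ∧ ∀ i, (P.coeff i).natDegree ≤ δ := by
  refine ⟨P.natDegree + ∑ i ∈ P.support, (P.coeff i).natDegree, by omega, fun i => ?_⟩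
  by_cases hi : i ∈ P.support
  · exact (Finset.single_le_sum (f := fun i => (P.coeff i).natDegree) (by simp) hi).trans
      (Nat.le_add_left _ _)
  · rw [Polynomial.notMem_support_iff] at hi
    simp [hi]

lemma mp_natDegree_le (φ : R →+* S) (P : R[X][X]) : (mp φ P).natDegree ≤ P.natDegree :=
  natDegree_map_le

lemma mp_coeff_natDegree_le (φ : R →+* S) (P : R[X][X]) (i : ℕ) :
    ((mp φ P).coeff i).natDegree ≤ (P.coeff i).natDegree := by
  simp only [mp, coe_mapRingHom, coeff_map]
  exact natDegree_map_le

lemma swap_coeff (P : R[X][X]) (i j : ℕ) :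
    ((Bivariate.swap P).coeff i).coeff j = (P.coeff j).coeff i := by
  induction P using Polynomial.induction_on' with
  | add p q hp hq => simp [hp, hq]
  | monomial n f =>
    induction f using Polynomial.induction_on' with
    | add p q hp hq => simp only [map_add, coeff_add, hp, hq]
    | monomial m r =>
      rw [Bivariate.swap_monomial_monomial]
      simp only [coeff_monomial]
      split_ifs <;> simp_all [coeff_monomial]

lemma swap_natDegree_le_iff (P : R[X][X]) (κ : ℕ) :
    (Bivariate.swap P).natDegree ≤ κ ↔ ∀ i, (P.coeff i).natDegree ≤ κ := by
  simp only [natDegree_le_iff_coeff_eq_zero]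
  constructor
  · intro h i N hN
    rw [← swap_coeff, h N hN, coeff_zero]
  · intro h N hN
    ext j
    rw [swap_coeff, h j N hN, coeff_zero]

lemma factor_deg [IsDomain R] {u v f : R[X][X]} (h : u * v = f) (hf : f ≠ 0) {κ : ℕ}
    (hκ : ∀ i, (f.coeff i).natDegree ≤ κ) (i : ℕ) : (u.coeff i).natDegree ≤ κ := by
  rw [← swap_natDegree_le_iff] at hκ
  revert i
  rw [← swap_natDegree_le_iff]
  subst h
  rw [map_mul, natDegree_mul] at hκ
  · omega
  · intro h0
    rw [map_eq_zero_iff _ (AlgEquiv.injective _)] at h0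
    simp [h0] at hf
  · intro h0
    rw [map_eq_zero_iff _ (AlgEquiv.injective _)] at h0
    simp [h0] at hf

end generic

/-- the ultrapower -/
abbrev Om (F : Type*) := Germ ((hyperfilter ℕ : Ultrafilter ℕ) : Filter ℕ) F

section
variable {F : Type*} [Field F]

/-- projection to the ultrapower -/
noncomputable def pi (F : Type*) [Field F] : (ℕ → F) →+* Om F := Germ.coeRingHom _

lemma pi_surj : Function.Surjective (pi F) := Quotient.mk_surjective

lemma pi_eq_iff (x y : ℕ → F) : pi F x = pi F y ↔ ∀ᶠ k in hyperfilter ℕ, x k = y k :=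
  Germ.coe_eq

lemma pi_eq_zero_iff (x : ℕ → F) : pi F x = 0 ↔ ∀ᶠ k in hyperfilter ℕ, x k = 0 :=
  pi_eq_iff x 0

lemma pi_ne_zero_iff (x : ℕ → F) : pi F x ≠ 0 ↔ ∀ᶠ k in hyperfilter ℕ, x k ≠ 0 := by
  rw [ne_eq, pi_eq_zero_iff]
  exact Ultrafilter.eventually_not.symm

/-- component at `k` -/
def cp (F : Type*) [Field F] (k : ℕ) : (ℕ → F) →+* F := Pi.evalRingHom _ k

@[simp] lemma cp_apply (k : ℕ) (x : ℕ → F) : cp F k x = x k := rfl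

lemma mp_cp_coeff (P : (ℕ → F)[X][X]) (k i j : ℕ) :
    ((mp (cp F k) P).coeff i).coeff j = (P.coeff i).coeff j k := mp_coeff _ _ _ _

lemma map_cp_coeff (P : (ℕ → F)[X]) (k i : ℕ) :
    (P.map (cp F k)).coeff i = P.coeff i k := coeff_map _ _

lemma mp_pi_ne_zero {P : (ℕ → F)[X][X]} (h : mp (pi F) P ≠ 0) :
    ∀ᶠ k in hyperfilter ℕ, mp (cp F k) P ≠ 0 := by
  obtain ⟨i, j, hij⟩ : ∃ i j, ((mp (pi F) P).coeff i).coeff j ≠ 0 := by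
    by_contra! hc
    exact h (ext2 (by simpa using hc))
  rw [mp_coeff, pi_ne_zero_iff] at hij
  filter_upwards [hij] with k hk h0
  apply hk
  rw [← mp_cp_coeff, h0]; simp

lemma map_pi_ne_zero {P : (ℕ → F)[X]} (h : P.map (pi F) ≠ 0) :
    ∀ᶠ k in hyperfilter ℕ, P.map (cp F k) ≠ 0 := by
  obtain ⟨i, hij⟩ : ∃ i, (P.map (pi F)).coeff i ≠ 0 := by
    by_contra! hc
    exact h (by ext i; simpa using hc i)
  rw [coeff_map, pi_ne_zero_iff] at hij
  filter_upwards [hij] with k hk h0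
  apply hk
  rw [← map_cp_coeff, h0]; simp

lemma mp_pi_eq_zero {P : (ℕ → F)[X][X]} (h : ∀ᶠ k in hyperfilter ℕ, mp (cp F k) P = 0) :
    mp (pi F) P = 0 := by
  by_contra hne
  obtain ⟨k, h1, h2⟩ := (h.and (mp_pi_ne_zero hne)).exists
  exact h2 h1

/-- bounded families of polynomials glue -/
lemma exists_glue (u : ℕ → F[X][X]) (δ : ℕ) (h1 : ∀ᶠ k in hyperfilter ℕ, (u k).natDegree ≤ δ)
    (h2 : ∀ᶠ k in hyperfilter ℕ, ∀ i, ((u k).coeff i).natDegree ≤ δ) :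
    ∃ P : (ℕ → F)[X][X], ∀ᶠ k in hyperfilter ℕ, mp (cp F k) P = u k := by
  refine ⟨∑ i ∈ Finset.range (δ + 1), monomial i (∑ j ∈ Finset.range (δ + 1),
    monomial j (fun k => ((u k).coeff i).coeff j)), ?_⟩
  filter_upwards [h1, h2] with k hk1 hk2
  apply ext2
  intro i j
  rw [mp_coeff]
  simp only [finsetSum_coeff, coeff_monomial, Finset.sum_ite_eq', Finset.mem_range]
  split_ifs with h3
  · simp only [finsetSum_coeff, coeff_monomial, Finset.sum_ite_eq', Finset.mem_range]
    split_ifs with h4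
    · rfl
    · rw [map_zero, coeff_eq_zero_of_natDegree_lt ((hk2 i).trans_lt (by omega))]
  · rw [coeff_zero, map_zero, coeff_eq_zero_of_natDegree_lt (p := u k) (hk1.trans_lt (by omega)),
      coeff_zero]

lemma glue_monic {P : (ℕ → F)[X][X]} {u : ℕ → F[X][X]} {n : ℕ}
    (h : ∀ᶠ k in hyperfilter ℕ, mp (cp F k) P = u k)
    (hm : ∀ᶠ k in hyperfilter ℕ, (u k).Monic ∧ (u k).natDegree = n) :
    (mp (pi F) P).Monic ∧ (mp (pi F) P).natDegree = n := by
  have hc : (mp (pi F) P).coeff n = 1 := by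
    ext j
    rw [mp_coeff]
    have : (1 : (Om F)[X]).coeff j = pi F ((1 : (ℕ → F)[X]).coeff j) := by
      rw [coeff_one, coeff_one]; split_ifs <;> simp
    rw [this, pi_eq_iff]
    filter_upwards [h, hm] with k hk hmk
    rw [← mp_cp_coeff, hk, ← hmk.2, hmk.1.coeff_natDegree, coeff_one, coeff_one]
    split_ifs <;> rfl
  have hle : (mp (pi F) P).natDegree ≤ n := by
    rw [natDegree_le_iff_coeff_eq_zero]
    intro N hN
    ext j
    rw [mp_coeff, coeff_zero, pi_eq_zero_iff]
    filter_upwards [h, hm] with k hk hmk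
    rw [← mp_cp_coeff, hk, coeff_eq_zero_of_natDegree_lt (p := u k) (by omega), coeff_zero]
  have hdeg : (mp (pi F) P).natDegree = n := le_antisymm hle
    (le_natDegree_of_ne_zero (by rw [hc]; exact one_ne_zero))
  exact ⟨by rw [Monic, leadingCoeff, hdeg, hc], hdeg⟩

lemma eventually_irreducible {P : (ℕ → F)[X][X]} (hm : P.Monic)
    (hirr : Irreducible (mp (pi F) P)) :
    ∀ᶠ k in hyperfilter ℕ, Irreducible (mp (cp F k) P) := by
  by_contra hcon
  rw [← Ultrafilter.eventually_not] at hcon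
  obtain ⟨δ, hδ1, hδ2⟩ := exists_deg_bound P
  have hP1 : ∀ k, mp (cp F k) P ≠ 1 := by
    intro k hk
    have h1 := mp_natDegree_monic (cp F k) hm
    rw [hk, natDegree_one] at h1
    have := hm.natDegree_eq_zero.1 h1.symm
    rw [this, map_one] at hirr
    exact not_irreducible_one hirr
  have hf : ∀ k, ¬ Irreducible (mp (cp F k) P) → ∃ u v : F[X][X], u.Monic ∧ v.Monic ∧
      u * v = mp (cp F k) P ∧ 0 < u.natDegree ∧ 0 < v.natDegree := by
    intro k hk
    rw [(mp_monic _ hm).irreducible_iff_natDegree'] at hk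
    push Not at hk
    obtain ⟨u, v, hu, hv, huv, hd⟩ := hk (hP1 k)
    rw [Finset.mem_Ioc] at hd
    refine ⟨u, v, hu, hv, huv, ?_, hd.1⟩
    have := hu.natDegree_mul hv
    rw [huv] at this
    omega
  have hf' : ∀ k, ∃ u v : F[X][X], ¬ Irreducible (mp (cp F k) P) → u.Monic ∧ v.Monic ∧
      u * v = mp (cp F k) P ∧ 0 < u.natDegree ∧ 0 < v.natDegree := by
    intro k
    by_cases hk : ¬ Irreducible (mp (cp F k) P)
    · obtain ⟨u, v, h⟩ := hf k hk
      exact ⟨u, v, fun _ => h⟩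
    · exact ⟨0, 0, fun h => absurd h hk⟩
  choose u v huv using hf'
  have key : ∀ k, ¬ Irreducible (mp (cp F k) P) → (u k).natDegree ≤ δ ∧ (v k).natDegree ≤ δ ∧
      (∀ i, ((u k).coeff i).natDegree ≤ δ) ∧ (∀ i, ((v k).coeff i).natDegree ≤ δ) := by
    intro k hk
    obtain ⟨h1, h2, h3, h4, h5⟩ := huv k hk
    have h6 := h1.natDegree_mul h2
    rw [h3, mp_natDegree_monic _ hm] at h6
    have h7 : ∀ i, ((mp (cp F k) P).coeff i).natDegree ≤ δ := fun i =>
      (mp_coeff_natDegree_le _ _ _).trans (hδ2 i)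
    have h0 := (mp_monic (cp F k) hm).ne_zero
    exact ⟨by omega, by omega, factor_deg h3 h0 h7,
      factor_deg ((mul_comm _ _).trans h3) h0 h7⟩
  obtain ⟨uu, huu⟩ := exists_glue u δ (hcon.mono fun k hk => (key k hk).1)
    (hcon.mono fun k hk => (key k hk).2.2.1)
  obtain ⟨vv, hvv⟩ := exists_glue v δ (hcon.mono fun k hk => (key k hk).2.1)
    (hcon.mono fun k hk => (key k hk).2.2.2)
  obtain ⟨n, hn, hun⟩ : ∃ n ∈ Set.Icc 1 δ, ∀ᶠ k in hyperfilter ℕ, (u k).natDegree = n := by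
    rw [← Ultrafilter.eventually_exists_mem_iff (Set.finite_Icc 1 δ)]
    filter_upwards [hcon] with k hk
    exact ⟨_, ⟨(huv k hk).2.2.2.1, (key k hk).1⟩, rfl⟩
  obtain ⟨n', hn', hvn⟩ : ∃ n ∈ Set.Icc 1 δ, ∀ᶠ k in hyperfilter ℕ, (v k).natDegree = n := by
    rw [← Ultrafilter.eventually_exists_mem_iff (Set.finite_Icc 1 δ)]
    filter_upwards [hcon] with k hk
    exact ⟨_, ⟨(huv k hk).2.2.2.2, (key k hk).2.1⟩, rfl⟩
  have hU := glue_monic huu (n := n) (by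
    filter_upwards [hcon, hun] with k hk h using ⟨(huv k hk).1, h⟩)
  have hV := glue_monic hvv (n := n') (by
    filter_upwards [hcon, hvn] with k hk h using ⟨(huv k hk).2.1, h⟩)
  have hUV : mp (pi F) P = mp (pi F) uu * mp (pi F) vv := by
    rw [← sub_eq_zero, ← map_mul, ← map_sub]
    apply mp_pi_eq_zero
    filter_upwards [hcon, huu, hvv] with k hk h1 h2
    rw [map_sub, map_mul, h1, h2, (huv k hk).2.2.1, sub_self]
  rcases hirr.isUnit_or_isUnit hUV with h | h
  · have := hU.1.eq_one_of_isUnit h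
    rw [this, natDegree_one] at hU
    have := hn.1; omega
  · have := hV.1.eq_one_of_isUnit h
    rw [this, natDegree_one] at hV
    have := hn'.1; omega

instance [IsAlgClosed F] : IsAlgClosed (Om F) := by
  apply IsAlgClosed.of_exists_root
  intro P hP hirr
  obtain ⟨Q, hQ, hd, hm⟩ := lifts_and_natDegree_eq_and_monic (f := pi F) (p := P)
    ((Polynomial.mem_lifts _).2 (Polynomial.map_surjective _ pi_surj P)) hP
  have : ∀ k, ∃ x, (Q.map (cp F k)).eval x = 0 := by
    intro k
    apply IsAlgClosed.exists_root
    rw [degree_eq_natDegree (hm.map _).ne_zero, hm.natDegree_map, hd]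
    have := hirr.natDegree_pos
    exact_mod_cast this.ne'
  choose x hx using this
  refine ⟨pi F x, ?_⟩
  rw [← hQ, eval_map_apply, pi_eq_zero_iff]
  filter_upwards with k
  change cp F k (eval x Q) = 0
  rw [← eval_map_apply, cp_apply, hx]

variable (p : ℕ) [Fact p.Prime] [CharP F p]

instance : CharP (Om F) p :=
  charP_of_injective_ringHom (f := (pi F).comp (Pi.constRingHom ℕ F)) (RingHom.injective _) p

/-- the nonstandard Frobenius -/
noncomputable def sg (e : ℕ → ℕ) : Om F →+* Om F where
  toFun := Germ.map₂ (fun n x => x ^ p ^ n) (Germ.ofFun e)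
  map_one' := congrArg (Germ.ofFun) (funext fun k => by simp)
  map_zero' := congrArg (Germ.ofFun) (funext fun k => by
    simp [(Fact.out : p.Prime).ne_zero])
  map_mul' x y := by
    induction x using Germ.inductionOn
    induction y using Germ.inductionOn
    exact congrArg (Germ.ofFun) (funext fun k => by simp [mul_pow])
  map_add' x y := by
    induction x using Germ.inductionOn
    induction y using Germ.inductionOn
    exact congrArg (Germ.ofFun) (funext fun k => by simp [add_pow_char_pow])

lemma sg_pi (e : ℕ → ℕ) (x : ℕ → F) : sg p e (pi F x) = pi F (fun k => x k ^ p ^ e k) := rfl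

theorem count_Om [IsAlgClosed F] (e : ℕ → ℕ) (he : ∀ n, ∀ᶠ k in hyperfilter ℕ, n ≤ e k)
    (d : ℕ) (hd : 0 < d) (f : (Om F)[X][X]) (hm : f.Monic) (hfd : f.natDegree = d)
    (hirr : Irreducible f) (hder : derivative f ≠ 0) (D E : (Om F)[X]) (hD : D ≠ 0) (hE : E ≠ 0)
    (h : Fin d → (Om F)[X][X])
    (hyp : ∀ a b, sg p e a = a → ev a b f = 0 → D.eval a ≠ 0 →
      ∃ i, D.eval a * sg p e b = ev a b (h i)) (i : Fin d) :
    ∃ a b, sg p e a = a ∧ ev a b f = 0 ∧ D.eval a ≠ 0 ∧ E.eval a ≠ 0 ∧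
        D.eval a * sg p e b = ev a b (h i) := by
  obtain ⟨f, rfl, hfd', hm'⟩ := exists_monic_lift (pi F) pi_surj f hm
  rw [hfd] at hfd'
  obtain ⟨D, rfl⟩ := Polynomial.map_surjective _ pi_surj D
  obtain ⟨E, rfl⟩ := Polynomial.map_surjective _ pi_surj E
  choose h' hh' using fun i => mp_surjective (pi F) pi_surj (h i)
  obtain rfl : (fun i => mp (pi F) (h' i)) = h := funext hh'
  obtain ⟨κ, -, hκ⟩ := exists_deg_bound f
  choose δ hδ1 hδ2 using fun i => exists_deg_bound (h' i)
  obtain ⟨Δ, hΔ⟩ : ∃ Δ, Δ = D.natDegree + E.natDegree + ∑ i, δ i := ⟨_, rfl⟩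
  have hδΔ : ∀ i, δ i ≤ Δ := fun i => by
    have := Finset.single_le_sum (f := δ) (by simp) (Finset.mem_univ i)
    omega
  obtain ⟨e0, he0⟩ := count p F d κ Δ hd
  have hev : ∀ (P : (ℕ → F)[X][X]) (a b : ℕ → F) (k : ℕ),
      ev (a k) (b k) (mp (cp F k) P) = ev a b P k := fun P a b k => ev_mp (cp F k) a b P
  have hevl : ∀ (P : (ℕ → F)[X]) (a : ℕ → F) (k : ℕ),
      (P.map (cp F k)).eval (a k) = P.eval a k := fun P a k => eval_map_apply (f := cp F k) (x := a)
  -- the hypothesis holds eventually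
  have hyp' : ∀ᶠ k in hyperfilter ℕ, ∀ a b, a ^ p ^ e k = a → ev a b (mp (cp F k) f) = 0 →
      (D.map (cp F k)).eval a ≠ 0 → ∃ i, (D.map (cp F k)).eval a * b ^ p ^ e k =
        ev a b (mp (cp F k) (h' i)) := by
    by_contra hcon
    rw [← Ultrafilter.eventually_not] at hcon
    push Not at hcon
    obtain ⟨a, ha⟩ := hcon.choice
    obtain ⟨b, hb⟩ := ha.choice
    obtain ⟨i, hi⟩ := hyp (pi F a) (pi F b)
      (by rw [sg_pi, pi_eq_iff]; exact hb.mono fun k hk => hk.1)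
      (by rw [ev_mp, pi_eq_zero_iff]; exact hb.mono fun k hk => (hev f a b k) ▸ hk.2.1)
      (by
        rw [eval_map_apply, pi_ne_zero_iff]
        exact hb.mono fun k hk => (hevl D a k) ▸ hk.2.2.1)
    rw [sg_pi, eval_map_apply, ev_mp, ← map_mul, pi_eq_iff] at hi
    obtain ⟨k, h1, h2⟩ := (hi.and hb).exists
    apply h2.2.2.2 i
    rw [hevl, hev]
    exact h1
  have hfin : ∀ᶠ k in hyperfilter ℕ, ∃ a b, a ^ p ^ e k = a ∧ ev a b (mp (cp F k) f) = 0 ∧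
      (D.map (cp F k)).eval a ≠ 0 ∧ (E.map (cp F k)).eval a ≠ 0 ∧
      (D.map (cp F k)).eval a * b ^ p ^ e k = ev a b (mp (cp F k) (h' i)) := by
    rw [mp_derivative] at hder
    filter_upwards [he e0, hyp', eventually_irreducible hm' hirr, mp_pi_ne_zero hder,
      map_pi_ne_zero hD, map_pi_ne_zero hE] with k h1 h2 h3 h4 h5 h6
    refine he0 (e k) h1 (mp (cp F k) f) (mp_monic _ hm') ?_ h3 ?_ ?_ _ _ h5 h6 ?_ ?_
      (fun i => mp (cp F k) (h' i)) ?_ ?_ h2 i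
    · rw [mp_natDegree_monic _ hm', hfd']
    · exact fun j => (mp_coeff_natDegree_le _ _ _).trans (hκ j)
    · rwa [mp_derivative]
    · exact natDegree_map_le.trans (by omega)
    · exact natDegree_map_le.trans (by omega)
    · exact fun i => (mp_natDegree_le _ _).trans ((hδ1 i).trans (hδΔ i))
    · exact fun i j => (mp_coeff_natDegree_le _ _ _).trans ((hδ2 i j).trans (hδΔ i))
  obtain ⟨a, ha⟩ := hfin.choice
  obtain ⟨b, hb⟩ := ha.choice
  refine ⟨pi F a, pi F b, ?_, ?_, ?_, ?_, ?_⟩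
  · rw [sg_pi, pi_eq_iff]; exact hb.mono fun k hk => hk.1
  · rw [ev_mp, pi_eq_zero_iff]; exact hb.mono fun k hk => (hev f a b k) ▸ hk.2.1
  · rw [eval_map_apply, pi_ne_zero_iff]
    exact hb.mono fun k hk => (hevl D a k) ▸ hk.2.2.1
  · rw [eval_map_apply, pi_ne_zero_iff]
    exact hb.mono fun k hk => (hevl E a k) ▸ hk.2.2.2.1
  · rw [sg_pi, eval_map_apply, ev_mp, ← map_mul, pi_eq_iff]
    refine hb.mono fun k hk => ?_
    have := hk.2.2.2.2
    rw [hevl, hev] at this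
    exact this

end

end FFP

namespace FFP

open Module Polynomial

lemma exists_algHom_of_finiteType (A R : Type*) [Field A] [IsAlgClosed A] [CommRing R]
    [Nontrivial R] [Algebra A R] [Algebra.FiniteType A R] : Nonempty (R →ₐ[A] A) := by
  obtain ⟨m, hm⟩ := Ideal.exists_maximal R
  let _ : Field (R ⧸ m) := Ideal.Quotient.field m
  have : Algebra.FiniteType A (R ⧸ m) :=
    Algebra.FiniteType.of_surjective (Ideal.Quotient.mkₐ A m) (Ideal.Quotient.mkₐ_surjective A m)
  have : Module.Finite A (R ⧸ m) := finite_of_finite_type_of_isJacobsonRing A (R ⧸ m)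
  exact ⟨(IsAlgClosed.lift (M := A) (R := A) (S := R ⧸ m)).comp (Ideal.Quotient.mkₐ A m)⟩

lemma mp_mem_range {R S : Type*} [CommRing R] [CommRing S] (φ : R →+* S) (P : S[X][X])
    (h : ∀ i j, (P.coeff i).coeff j ∈ φ.range) : ∃ Q, mp φ Q = P := by
  have : P ∈ lifts (mapRingHom φ) := by
    rw [lifts_iff_coeff_lifts]
    intro n
    have : P.coeff n ∈ lifts φ := by
      rw [lifts_iff_coeff_lifts]
      exact fun j => h n j
    exact (mem_lifts _).1 this
  exact (mem_lifts _).1 this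

theorem irreducible_mp {A K : Type*} [Field A] [IsAlgClosed A] [Field K] (φ : A →+* K)
    (f : A[X][X]) (hm : f.Monic) (hirr : Irreducible f) : Irreducible (mp φ f) := by
  classical
  by_contra hcon
  rw [(mp_monic _ hm).irreducible_iff_natDegree'] at hcon
  have h1 : mp φ f ≠ 1 := by
    intro h
    have h2 := mp_natDegree_monic φ hm
    rw [h, natDegree_one] at h2
    rw [hm.natDegree_eq_zero.1 h2.symm] at hirr
    exact not_irreducible_one hirr
  push Not at hcon
  obtain ⟨u, v, hu, hv, huv, hd⟩ := hcon h1
  rw [Finset.mem_Ioc] at hd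
  have hud : 0 < u.natDegree := by
    have := hu.natDegree_mul hv
    rw [huv] at this
    omega
  let _ : Algebra A K := φ.toAlgebra
  obtain ⟨δ, hδ1, hδ2⟩ := exists_deg_bound u
  obtain ⟨ε, hε1, hε2⟩ := exists_deg_bound v
  let T : Finset K := ((Finset.range (δ + 1) ×ˢ Finset.range (δ + 1)).image
      fun ij => (u.coeff ij.1).coeff ij.2) ∪
    ((Finset.range (ε + 1) ×ˢ Finset.range (ε + 1)).image fun ij => (v.coeff ij.1).coeff ij.2)
  let R := Algebra.adjoin A (T : Set K)
  have : Algebra.FiniteType A R := Subalgebra.fg_iff_finiteType R |>.1 ⟨T, rfl⟩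
  obtain ⟨χ⟩ := exists_algHom_of_finiteType A R
  have hu' : ∀ i j, (u.coeff i).coeff j ∈ (R.val : R →+* K).range := by
    intro i j
    have : (u.coeff i).coeff j ∈ R := by
      by_cases hi : i ≤ δ
      · by_cases hj : j ≤ δ
        · apply Algebra.subset_adjoin
          apply Finset.mem_coe.2
          apply Finset.mem_union_left
          exact Finset.mem_image.2 ⟨(i, j), by simp; omega, rfl⟩
        · rw [coeff_eq_zero_of_natDegree_lt ((hδ2 i).trans_lt (by omega))]
          exact R.zero_mem
      · rw [coeff_eq_zero_of_natDegree_lt (p := u) (by omega), coeff_zero]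
        exact R.zero_mem
    exact ⟨⟨_, this⟩, rfl⟩
  have hv' : ∀ i j, (v.coeff i).coeff j ∈ (R.val : R →+* K).range := by
    intro i j
    have : (v.coeff i).coeff j ∈ R := by
      by_cases hi : i ≤ ε
      · by_cases hj : j ≤ ε
        · apply Algebra.subset_adjoin
          apply Finset.mem_coe.2
          apply Finset.mem_union_right
          exact Finset.mem_image.2 ⟨(i, j), by simp; omega, rfl⟩
        · rw [coeff_eq_zero_of_natDegree_lt ((hε2 i).trans_lt (by omega))]
          exact R.zero_mem
      · rw [coeff_eq_zero_of_natDegree_lt (p := v) (by omega), coeff_zero]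
        exact R.zero_mem
    exact ⟨⟨_, this⟩, rfl⟩
  obtain ⟨u1, hu1⟩ := mp_mem_range _ u hu'
  obtain ⟨v1, hv1⟩ := mp_mem_range _ v hv'
  obtain ⟨u2, hu2, hud2, hum⟩ := lifts_and_natDegree_eq_and_monic
    ((mem_lifts _).2 ⟨u1, hu1⟩) hu
  obtain ⟨v2, hv2, hvd2, hvm⟩ := lifts_and_natDegree_eq_and_monic
    ((mem_lifts _).2 ⟨v1, hv1⟩) hv
  have hmul : u2 * v2 = mp (algebraMap A R) f := by
    have hinj : Function.Injective (mp (R.val : R →+* K)) :=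
      Polynomial.map_injective _ (Polynomial.map_injective _ Subtype.val_injective)
    apply hinj
    rw [map_mul]
    change u2.map _ * v2.map _ = _
    rw [hu2, hv2, huv, mp_comp]
    rfl
  have hmul2 : f = mp (χ : R →+* A) u2 * mp (χ : R →+* A) v2 := by
    rw [← map_mul, hmul, mp_comp]
    have : (χ : R →+* A).comp (algebraMap A R) = RingHom.id A := by
      ext x; simp
    rw [this]
    simp [mp]
  rcases hirr.isUnit_or_isUnit hmul2 with h | h
  · have h2 := (mp_monic _ hum).eq_one_of_isUnit h
    have h3 := mp_natDegree_monic (χ : R →+* A) hum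
    rw [h2, natDegree_one] at h3
    omega
  · have h2 := (mp_monic _ hvm).eq_one_of_isUnit h
    have h3 := mp_natDegree_monic (χ : R →+* A) hvm
    rw [h2, natDegree_one] at h3
    omega

end FFP

namespace FFP

open Module Polynomial
open scoped IntermediateField

section field
variable {K : Type*} [Field K] (p : ℕ) [Fact p.Prime] [CharP K p]

lemma exists_separable_pow (E : Subfield K) (s : K) (hs : IsAlgebraic E s) :
    ∃ r0, ∀ r ≥ r0, IsSeparable E (s ^ p ^ r) := by
  have : CharP E p := (algebraMap E K).charP Subtype.val_injective p
  have : ExpChar E p := ExpChar.prime Fact.out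
  obtain ⟨g, hg, m, hm⟩ := (minpoly.irreducible hs.isIntegral).hasSeparableContraction p
  have h1 : IsSeparable E (s ^ p ^ m) := by
    apply Separable.of_dvd hg
    apply minpoly.dvd
    have := minpoly.aeval E s
    rw [← hm, expand_aeval] at this
    exact this
  refine ⟨m, fun r hr => ?_⟩
  obtain ⟨l, rfl⟩ := Nat.exists_eq_add_of_le hr
  rw [pow_add, pow_mul]
  rw [← mem_separableClosure_iff] at h1 ⊢
  exact pow_mem h1 _

lemma exists_normal [IsAlgClosed K] (E : Subfield K) (S : Finset K)
    (hS : ∀ s ∈ S, IsAlgebraic E s) :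
    ∃ (r : ℕ) (L : IntermediateField E K), FiniteDimensional E L ∧ Algebra.IsSeparable E L ∧
      Normal E L ∧ ∀ s ∈ S, s ^ p ^ r ∈ L := by
  classical
  have hr : ∃ r, ∀ s ∈ S, IsSeparable E (s ^ p ^ r) := by
    choose! r hr using fun s (hs : s ∈ S) => exists_separable_pow p E s (hS s hs)
    exact ⟨S.sup r, fun s hs => hr s hs _ (Finset.le_sup hs)⟩
  obtain ⟨r, hr⟩ := hr
  let P : E[X] := ∏ s ∈ S, minpoly E (s ^ p ^ r)
  have hP0 : P ≠ 0 := Finset.prod_ne_zero_iff.2 fun s hs => minpoly.ne_zero (hr s hs).isIntegral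
  have hsp : (P.map (algebraMap E K)).Splits := IsAlgClosed.splits _
  have hspl := IntermediateField.adjoin_rootSet_isSplittingField hsp
  refine ⟨r, IntermediateField.adjoin E (P.rootSet K), ?_, ?_, ?_, ?_⟩
  · exact IsSplittingField.finiteDimensional _ P
  · rw [IntermediateField.isSeparable_adjoin_iff_isSeparable]
    intro x hx
    rw [mem_rootSet] at hx
    have h2 := hx.2
    simp only [P, map_prod] at h2
    obtain ⟨s, hs, h3⟩ := Finset.prod_eq_zero_iff.1 h2
    exact Separable.of_dvd (hr s hs) (minpoly.dvd _ _ h3)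
  · exact Normal.of_isSplittingField P
  · intro s hs
    apply IntermediateField.subset_adjoin
    rw [mem_rootSet]
    refine ⟨hP0, ?_⟩
    simp only [P, map_prod]
    exact Finset.prod_eq_zero hs (minpoly.aeval _ _)

/-- primitive element, integral over a ring whose fraction field is `E` -/
lemma exists_prim (E : Subfield K) (T : Set K) (hT : E = Subfield.closure T)
    (L : IntermediateField E K) [FiniteDimensional E L] [Algebra.IsSeparable E L] :
    ∃ y ∈ L, IsIntegral (Subring.closure T) y ∧ L = E⟮y⟯ := by
  obtain ⟨y0, hy0⟩ := Field.exists_primitive_element E L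
  have hL : L = E⟮(y0 : K)⟯ := by
    have := congrArg (IntermediateField.map L.val) hy0
    rw [IntermediateField.adjoin_map] at this
    rw [← AlgHom.fieldRange_eq_map, IntermediateField.fieldRange_val] at this
    simpa using this.symm
  have hle : Subring.closure T ≤ E.toSubring := by
    rw [hT]; exact Subring.closure_le.2 Subfield.subset_closure
  have halg : IsAlgebraic (Subring.closure T) (y0 : K) := by
    let _ : Algebra (Subring.closure T) E := (Subring.inclusion hle).toAlgebra
    have : IsScalarTower (Subring.closure T) E K := IsScalarTower.of_algebraMap_eq fun x => rfl
    have : Algebra.IsAlgebraic (Subring.closure T) E := by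
      constructor
      intro x
      have hx : (x : K) ∈ Subfield.closure T := hT.le x.2
      rw [Subfield.mem_closure_iff] at hx
      obtain ⟨u, hu, v, hv, huv⟩ := hx
      by_cases hv0 : v = 0
      · have : x = 0 := by
          apply Subtype.ext
          rw [← huv, hv0]; simp
        rw [this]; exact isAlgebraic_zero
      refine ⟨C ⟨v, hv⟩ * X - C ⟨u, hu⟩, ?_, ?_⟩
      · intro h
        have := congrArg (fun P => coeff P 1) h
        simp at this
        exact hv0 this
      · apply Subtype.ext
        simp only [map_sub, map_mul, aeval_C, aeval_X]
        change v * (x : K) - u = 0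
        rw [← huv]; field_simp; ring
    have h1 : IsAlgebraic E (y0 : K) := by
      have := Algebra.IsAlgebraic.isAlgebraic (R := E) y0
      exact this.algHom L.val
    exact h1.restrictScalars (Subring.closure T)
  obtain ⟨q, hq0, hq⟩ := halg.exists_integral_multiple
  have hqE : (q : K) ∈ E := hle q.2
  have hq0' : (q : K) ≠ 0 := fun h => hq0 (Subtype.ext h)
  have hsm : q • (y0 : K) = (q : K) * y0 := rfl
  have hmem : (q : K) * y0 ∈ L := mul_mem (L.algebraMap_mem ⟨q, hqE⟩) y0.2
  refine ⟨(q : K) * y0, hmem, hsm ▸ hq, ?_⟩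
  apply le_antisymm
  · refine hL.le.trans (IntermediateField.adjoin_simple_le_iff.2 ?_)
    have h1 := IntermediateField.mem_adjoin_simple_self E ((q : K) * y0)
    have h2 := mul_mem (E⟮(q : K) * (y0 : K)⟯.algebraMap_mem ⟨q, hqE⟩⁻¹) h1
    have : algebraMap E K ⟨q, hqE⟩⁻¹ * ((q : K) * y0) = y0 := by
      rw [map_inv₀]
      change (q : K)⁻¹ * _ = _
      field_simp
    rwa [this] at h2
  · rw [IntermediateField.adjoin_simple_le_iff]
    exact hmem

end field

section loc
/-- fractions -/
def LocR {R S K : Type*} [CommRing R] [IsDomain R] [CommRing S] [Field K] (ι : R →+* S)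
    (Θ : S →+* K) : Subring K where
  carrier := {z | ∃ D : R, D ≠ 0 ∧ ∃ P : S, Θ (ι D) * z = Θ P}
  zero_mem' := ⟨1, one_ne_zero, 0, by simp⟩
  one_mem' := ⟨1, one_ne_zero, 1, by simp⟩
  add_mem' := by
    rintro x y ⟨D, hD, P, hP⟩ ⟨E, hE, Q, hQ⟩
    refine ⟨D * E, mul_ne_zero hD hE, ι E * P + ι D * Q, ?_⟩
    simp only [map_mul, map_add, ← hP, ← hQ]; ring
  mul_mem' := by
    rintro x y ⟨D, hD, P, hP⟩ ⟨E, hE, Q, hQ⟩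
    refine ⟨D * E, mul_ne_zero hD hE, P * Q, ?_⟩
    simp only [map_mul, ← hP, ← hQ]; ring
  neg_mem' := by
    rintro x ⟨D, hD, P, hP⟩
    exact ⟨D, hD, -P, by simp [← hP]⟩

lemma LocR_common {R S K : Type*} [CommRing R] [IsDomain R] [CommRing S] [Field K] (ι : R →+* S)
    (Θ : S →+* K) {I : Type*} (z : I → K) (s : Finset I) (hz : ∀ i ∈ s, z i ∈ LocR ι Θ) :
    ∃ D : R, D ≠ 0 ∧ ∀ i ∈ s, ∃ P : S, Θ (ι D) * z i = Θ P := by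
  classical
  induction s using Finset.induction_on with
  | empty => exact ⟨1, one_ne_zero, by simp⟩
  | insert a s ha ih =>
    obtain ⟨D, hD, h⟩ := ih fun i hi => hz i (Finset.mem_insert_of_mem hi)
    obtain ⟨E, hE, Q, hQ⟩ := hz a (Finset.mem_insert_self _ _)
    refine ⟨D * E, mul_ne_zero hD hE, fun i hi => ?_⟩
    rcases Finset.mem_insert.1 hi with rfl | hi
    · exact ⟨ι D * Q, by simp only [map_mul, ← hQ]; ring⟩
    · obtain ⟨P, hP⟩ := h i hi
      exact ⟨ι E * P, by simp only [map_mul, ← hP]; ring⟩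

variable {K K' : Type*} [Field K] [Field K']

/-- localisation of a functional relation -/
def LocP (H : Subring (K × K')) : Subring (K × K') where
  carrier := {z | ∃ v ∈ H, v.2 ≠ 0 ∧ v * z ∈ H}
  zero_mem' := ⟨1, H.one_mem, one_ne_zero, by simpa using H.zero_mem⟩
  one_mem' := ⟨1, H.one_mem, one_ne_zero, by simpa using H.one_mem⟩
  add_mem' := by
    rintro x y ⟨v, hv, hv0, h⟩ ⟨w, hw, hw0, h'⟩
    refine ⟨v * w, H.mul_mem hv hw, mul_ne_zero hv0 hw0, ?_⟩
    have : v * w * (x + y) = w * (v * x) + v * (w * y) := by ring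
    rw [this]
    exact H.add_mem (H.mul_mem hw h) (H.mul_mem hv h')
  mul_mem' := by
    rintro x y ⟨v, hv, hv0, h⟩ ⟨w, hw, hw0, h'⟩
    refine ⟨v * w, H.mul_mem hv hw, mul_ne_zero hv0 hw0, ?_⟩
    have : v * w * (x * y) = (v * x) * (w * y) := by ring
    rw [this]
    exact H.mul_mem h h'
  neg_mem' := by
    rintro x ⟨v, hv, hv0, h⟩
    refine ⟨v, hv, hv0, ?_⟩
    rw [mul_neg]
    exact H.neg_mem h

variable {H : Subring (K × K')}

lemma le_LocP : H ≤ LocP H := fun z hz => ⟨1, H.one_mem, one_ne_zero, by simpa using hz⟩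

lemma LocP_fun (hH : ∀ z ∈ H, z.1 = 0 → z.2 = 0) : ∀ z ∈ LocP H, z.1 = 0 → z.2 = 0 := by
  rintro z ⟨v, hv, hv0, h⟩ hz
  have := hH _ h (by simp [hz])
  simpa [hv0] using this

/-- division in `LocP` -/
lemma LocP_div {v z : K × K'} (hv : v ∈ LocP H) (hv0 : v.2 ≠ 0)
    (h : v * z ∈ LocP H) : z ∈ LocP H := by
  obtain ⟨u, hu, hu0, h1⟩ := hv
  obtain ⟨w, hw, hw0, h2⟩ := h
  refine ⟨w * (u * v), H.mul_mem hw h1, ?_, ?_⟩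
  · exact mul_ne_zero hw0 (mul_ne_zero hu0 hv0)
  · have : w * (u * v) * z = u * (w * (v * z)) := by ring
    rw [this]
    exact H.mul_mem hu h2
end loc

lemma exists_fin_roots {K : Type*} [Field K] [IsAlgClosed K] (f : K[X]) (hf : f.Monic) (d : ℕ)
    (hd : f.natDegree = d) : ∃ Y : Fin d → K, f = ∏ i, (X - C (Y i)) := by
  have hs := IsAlgClosed.splits f
  have h1 := hs.eq_prod_roots_of_monic hf
  have h2 := hs.natDegree_eq_card_roots
  rw [hd] at h2
  obtain ⟨l, hl⟩ := Quotient.exists_rep f.roots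
  have hl' : f.roots = (l : Multiset K) := hl.symm
  have hlen : l.length = d := by rw [h2, hl']; rfl
  subst hlen
  refine ⟨l.get, ?_⟩
  conv_lhs => rw [h1, hl']
  rw [Multiset.map_coe, Multiset.prod_coe, ← List.prod_ofFn]
  congr 1
  apply List.ext_getElem <;> simp
  
end FFP

namespace FFP

open Module Polynomial
open scoped IntermediateField

/-- the abstract counting property -/
def Cnt {K' : Type*} [Field K'] (σ' : K' →+* K') : Prop :=
  ∀ (d : ℕ), 0 < d → ∀ (f : K'[X][X]), f.Monic → f.natDegree = d → Irreducible f →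
    derivative f ≠ 0 → ∀ (D E : K'[X]), D ≠ 0 → E ≠ 0 → ∀ (h : Fin d → K'[X][X]),
    (∀ a b, σ' a = a → ev a b f = 0 → D.eval a ≠ 0 → ∃ i, D.eval a * σ' b = ev a b (h i)) →
    ∀ i, ∃ a b, σ' a = a ∧ ev a b f = 0 ∧ D.eval a ≠ 0 ∧ E.eval a ≠ 0 ∧
      D.eval a * σ' b = ev a b (h i)

section A
variable {A K K' : Type*} [Field A] [Field K] [Field K']

/-- evaluation at two points through a map -/
noncomputable def EV (j : A →+* K) (a b : K) : A[X][X] →+* K :=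
  eval₂RingHom (eval₂RingHom j a) b

lemma EV_eq (j : A →+* K) (a b : K) (P : A[X][X]) : EV j a b P = ev a b (mp j P) := by
  have : EV j a b = (ev a b).comp (mp j) := by
    apply Polynomial.ringHom_ext
    · intro q
      induction q using Polynomial.induction_on' with
      | add p q hp hq => simp only [map_add, hp, hq]
      | monomial n c => simp [EV, ev, mp, eval₂_monomial]
    · simp [EV, ev, mp]
  rw [this]; rfl

@[simp] lemma EV_C (j : A →+* K) (a b : K) (P : A[X]) : EV j a b (C P) = P.eval₂ j a := by
  simp [EV]

@[simp] lemma EV_X (j : A →+* K) (a b : K) : EV j a b X = b := by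
  simp [EV]

lemma core_point [IsAlgClosed A] (σ : K →+* K) (σ' : K' →+* K') (hC : Cnt σ') (j : A →+* K) (g : A →+* K')
    (τ : A →+* A) (hj : ∀ c, σ (j c) = j (τ c)) (hg : ∀ c, σ' (g c) = g (τ c))
    (a y : K) (ha : σ a = a) (f : A[X][X]) (d : ℕ) (hd : 0 < d) (hm : f.Monic)
    (hfd : f.natDegree = d) (hirr : Irreducible f) (hder : derivative f ≠ 0)
    (hker : ∀ P, EV j a y P = 0 → f ∣ P)
    (Y : Fin d → K) (hY : f.map (eval₂RingHom j a) = ∏ i, (X - C (Y i)))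
    (D Q : A[X]) (hD : D ≠ 0) (hQ : Q ≠ 0) (h : Fin d → A[X][X])
    (hh : ∀ i, D.eval₂ j a * σ (Y i) = EV j a y (h i)) (i : Fin d) :
    ∃ a' b' : K', σ' a' = a' ∧ (∀ P, EV j a y P = 0 → EV g a' b' P = 0) ∧
      D.eval₂ g a' ≠ 0 ∧ Q.eval₂ g a' ≠ 0 ∧ D.eval₂ g a' * σ' b' = EV g a' b' (h i) := by
  have hev : ∀ (P : A[X]) (x : K'), (P.map g).eval x = P.eval₂ g x := fun P x => eval_map _ _
  have hginj := g.injective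
  have hder' : derivative (mp g f) ≠ 0 := by
    rw [mp_derivative]
    intro h0
    apply hder
    apply Polynomial.map_injective (mapRingHom g) (Polynomial.map_injective g hginj)
    rw [Polynomial.map_zero]
    exact h0
  have hmon : (mp g f).Monic := mp_monic g hm
  have key := hC d hd (mp g f) hmon (by rw [mp_natDegree_monic g hm, hfd])
    (irreducible_mp g f hm hirr) hder' (D.map g) (Q.map g)
    ((Polynomial.map_ne_zero_iff hginj).2 hD) ((Polynomial.map_ne_zero_iff hginj).2 hQ)
    (fun i => mp g (h i)) ?_ i
  · obtain ⟨a', b', h1, h2, h3, h4, h5⟩ := key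
    rw [hev] at h3 h4 h5
    refine ⟨a', b', h1, ?_, h3, h4, ?_⟩
    · intro P hP
      obtain ⟨q, rfl⟩ := hker P hP
      rw [map_mul, EV_eq, h2, zero_mul]
    · rw [h5, EV_eq]
  · intro a' b' ha' hf' _
    rw [hev]
    simp only [← EV_eq] at hf' ⊢
    -- the relation W
    let fσ : A[X][X] := mp τ f
    let W : A[X][X][X] := C (C D) ^ d * fσ.map C - ∏ i, (C (C D) * X - C (h i))
    have hθ : σ.comp (eval₂RingHom j a) = (eval₂RingHom j a).comp (mapRingHom τ) := by
      apply Polynomial.ringHom_ext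
      · intro c; simp [hj]
      · simp [ha]
    have hθ' : σ'.comp (eval₂RingHom g a') = (eval₂RingHom g a').comp (mapRingHom τ) := by
      apply Polynomial.ringHom_ext
      · intro c; simp [hg]
      · simp [ha']
    have hcomp : (EV j a y).comp C = eval₂RingHom j a := by ext <;> simp
    have hcomp' : (EV g a' b').comp C = eval₂RingHom g a' := by ext <;> simp
    have hfσ : fσ.map (eval₂RingHom j a) = ∏ i, (X - C (σ (Y i))) := by
      have : fσ.map (eval₂RingHom j a) = (f.map (eval₂RingHom j a)).map σ := by
        simp only [fσ, mp, coe_mapRingHom, Polynomial.map_map, hθ]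
      rw [this, hY, Polynomial.map_prod]
      simp
    have hW : W.map (EV j a y) = 0 := by
      simp only [W, Polynomial.map_sub, Polynomial.map_mul, Polynomial.map_pow, Polynomial.map_map,
        hcomp, hfσ, Polynomial.map_prod, Polynomial.map_C, Polynomial.map_X, EV_C, ← hh]
      rw [sub_eq_zero]
      rw [← Fin.prod_const, ← Finset.prod_mul_distrib]
      apply Finset.prod_congr rfl
      intro i _
      rw [C_mul]; ring
    have hW' : W.map (EV g a' b') = 0 := by
      ext n
      rw [coeff_map, coeff_zero]
      have : EV j a y (W.coeff n) = 0 := by rw [← coeff_map, hW, coeff_zero]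
      obtain ⟨q, hq⟩ := hker _ this
      rw [hq, map_mul, hf', zero_mul]
    have hev0 := congrArg (Polynomial.eval (σ' b')) hW'
    simp only [W, Polynomial.map_sub, Polynomial.map_mul, Polynomial.map_pow, Polynomial.map_map,
        hcomp', Polynomial.map_prod, Polynomial.map_C, Polynomial.map_X, EV_C, eval_sub, eval_mul,
        eval_pow, eval_C, eval_X, eval_zero, eval_prod] at hev0
    have h0 : eval (σ' b') (fσ.map (eval₂RingHom g a')) = 0 := by
      have : fσ.map (eval₂RingHom g a') = (f.map (eval₂RingHom g a')).map σ' := by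
        simp only [fσ, mp, coe_mapRingHom, Polynomial.map_map, hθ']
      rw [this, eval_map, eval₂_at_apply, eval_map]
      have : eval₂ (eval₂RingHom g a') b' f = 0 := hf'
      rw [this, map_zero]
    rw [h0, mul_zero, zero_sub, neg_eq_zero, Finset.prod_eq_zero_iff] at hev0
    obtain ⟨i, _, hi⟩ := hev0
    exact ⟨i, sub_eq_zero.1 hi⟩

/-- build the partial map from a point -/
lemma core_W (p : ℕ) [Fact p.Prime] [CharP K p] [CharP K' p]
    (σ : K →+* K) (σ' : K' →+* K') (j : A →+* K) (g : A →+* K')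
    (τ : A →+* A) (hj : ∀ c, σ (j c) = j (τ c)) (hg : ∀ c, σ' (g c) = g (τ c))
    (a y : K) (ha : σ a = a) (a' b' : K') (ha' : σ' a' = a')
    (hk : ∀ P, EV j a y P = 0 → EV g a' b' P = 0)
    (D Q : A[X]) (hD : D.eval₂ g a' ≠ 0) (hQ : Q.eval₂ g a' ≠ 0) (h : A[X][X])
    (hh : D.eval₂ j a * σ y = EV j a y h) (hh' : D.eval₂ g a' * σ' b' = EV g a' b' h)
    (S : Finset K) (r : ℕ) (hS : ∀ s ∈ S, ∃ P, Q.eval₂ j a * s ^ p ^ r = EV j a y P)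
    [IsAlgClosed K'] :
    ∃ W : Subring (K × K'), (∀ z ∈ W, z.1 = 0 → z.2 = 0) ∧ (∀ c, (j c, g c) ∈ W) ∧
      (∀ z ∈ W, (σ z.1, σ' z.2) ∈ W) ∧ ∀ s ∈ S, ∃ s', (s, s') ∈ W := by
  have : ExpChar K p := ExpChar.prime Fact.out
  have : ExpChar K' p := ExpChar.prime Fact.out
  let H : Subring (K × K') := ((EV j a y).prod (EV g a' b')).range
  have hHmem : ∀ P, (EV j a y P, EV g a' b' P) ∈ H := fun P => ⟨P, rfl⟩
  have hHf : ∀ z ∈ H, z.1 = 0 → z.2 = 0 := by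
    rintro _ ⟨P, rfl⟩ h0
    exact hk P h0
  have hfun := LocP_fun hHf
  have hLm : ∀ P, (EV j a y P, EV g a' b' P) ∈ LocP H := fun P => le_LocP (hHmem P)
  have hLc : ∀ P : A[X], (P.eval₂ j a, P.eval₂ g a') ∈ LocP H := fun P => by
    simpa using hLm (C P)
  have hσy : (σ y, σ' b') ∈ LocP H := by
    refine LocP_div (hLc D) hD ?_
    rw [Prod.mk_mul_mk, hh, hh']
    exact hLm h
  have hstabH : ∀ P, (σ (EV j a y P), σ' (EV g a' b' P)) ∈ LocP H := by
    intro P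
    have : ∀ q : A[X], (σ (q.eval₂ j a), σ' (q.eval₂ g a')) ∈ LocP H := by
      intro q
      have := hLc (q.map τ)
      rw [eval₂_map, eval₂_map] at this
      rw [hom_eval₂, hom_eval₂, ha, ha']
      convert this using 4 <;> ext <;> simp [hj, hg]
    induction P using Polynomial.induction_on' with
    | add P Q hP hQ =>
      simp only [map_add]
      exact (LocP H).add_mem hP hQ
    | monomial n q =>
      rw [← C_mul_X_pow_eq_monomial]
      simp only [map_mul, map_pow, EV_C, EV_X]
      exact (LocP H).mul_mem (this q) ((LocP H).pow_mem hσy n)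
  have hstab : ∀ z ∈ LocP H, (σ z.1, σ' z.2) ∈ LocP H := by
    rintro z ⟨_, ⟨V, rfl⟩, hv0, ⟨U, hU⟩⟩
    refine LocP_div (hstabH V) ?_ ?_
    · simpa using hv0
    · have h1 := hstabH U
      have e1 := congrArg Prod.fst hU
      have e2 := congrArg Prod.snd hU
      simp only [RingHom.prod_apply, Prod.fst_mul, Prod.snd_mul] at e1 e2
      rw [e1, e2, map_mul, map_mul] at h1
      exact h1
  let Fr : K × K' →+* K × K' := RingHom.prodMap (iterateFrobenius K p r) (iterateFrobenius K' p r)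
  have hFr : ∀ z, Fr z = (z.1 ^ p ^ r, z.2 ^ p ^ r) := fun z =>
    Prod.ext (iterateFrobenius_def p r z.1) (iterateFrobenius_def p r z.2)
  refine ⟨(LocP H).comap Fr, ?_, ?_, ?_, ?_⟩
  · intro z hz h0
    rw [Subring.mem_comap, hFr] at hz
    have := hfun _ hz (by simp [h0, (Fact.out : p.Prime).ne_zero])
    simpa using eq_zero_of_pow_eq_zero this
  · intro c
    rw [Subring.mem_comap, hFr]
    exact (LocP H).pow_mem (by simpa using hLc (C c)) _
  · intro z hz
    rw [Subring.mem_comap, hFr] at hz ⊢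
    simpa using hstab _ hz
  · intro s hs
    obtain ⟨P, hP⟩ := hS s hs
    obtain ⟨s', hs'⟩ := IsAlgClosed.exists_pow_nat_eq (EV g a' b' P / Q.eval₂ g a')
      (n := p ^ r) (pow_pos (Fact.out : p.Prime).pos _)
    refine ⟨s', ?_⟩
    rw [Subring.mem_comap, hFr]
    refine LocP_div (hLc Q) hQ ?_
    rw [Prod.mk_mul_mk]
    simp only [hP, hs']
    rw [mul_div_cancel₀ _ hQ]
    exact hLm P
end A
end FFP

namespace FFP

open Module Polynomial
open scoped IntermediateField

section C
variable {K : Type*} [Field K] [IsAlgClosed K]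

lemma core_data (σ : K →+* K) (A : Subfield K) [IsAlgClosed A]
    (a : K) (htr : ∀ P : A[X], P.eval₂ A.subtype a = 0 → P = 0)
    (p : ℕ) [Fact p.Prime] [CharP K p]
    (T : Set K) (hTA : ∀ x ∈ T, x ∈ A ∨ x = a) (hTσ : ∀ x ∈ T, σ x = x)
    (S : Finset K) (hS : ∀ s ∈ S, IsAlgebraic (Subfield.closure T) s) :
    ∃ (y : K) (f : A[X][X]) (d : ℕ), 0 < d ∧ f.Monic ∧ f.natDegree = d ∧ Irreducible f ∧
      derivative f ≠ 0 ∧ (∀ P, EV A.subtype a y P = 0 → f ∣ P) ∧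
      ∃ Y : Fin d → K, f.map (eval₂RingHom A.subtype a) = ∏ i, (X - C (Y i)) ∧
      (∃ i, Y i = y) ∧
      ∃ D Q : A[X], D ≠ 0 ∧ Q ≠ 0 ∧ (∃ h : Fin d → A[X][X],
        ∀ i, D.eval₂ A.subtype a * σ (Y i) = EV A.subtype a y (h i)) ∧
        ∃ r : ℕ, ∀ s ∈ S, ∃ P, Q.eval₂ A.subtype a * s ^ p ^ r = EV A.subtype a y P := by
  classical
  set E := Subfield.closure T with hE
  set j : A →+* K := A.subtype with hj
  set θ : A[X] →+* K := eval₂RingHom j a with hθ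
  have hθinj : Function.Injective θ := by
    rw [injective_iff_map_eq_zero]; exact htr
  obtain ⟨r, L, hfin, hsep, hnor, hSL⟩ := exists_normal p E S hS
  obtain ⟨y, hyL, hyint, hLy⟩ := exists_prim E T hE L
  -- closure of T lies in the range of θ
  have hTθ : Subring.closure T ≤ θ.range := by
    rw [Subring.closure_le]
    intro x hx
    rcases hTA x hx with h | rfl
    · exact ⟨C ⟨x, h⟩, by simp [hθ, hj]⟩
    · exact ⟨X, by simp [hθ]⟩
  letI : Algebra A[X] K := θ.toAlgebra
  have hyint' : IsIntegral A[X] y := by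
    obtain ⟨q, hq, hq0⟩ := hyint
    have hl : q.map (Subring.closure T).subtype ∈ Polynomial.lifts θ := by
      rw [Polynomial.lifts_iff_coeff_lifts]
      intro n
      rw [coeff_map]
      exact hTθ (q.coeff n).2
    obtain ⟨q', h1, -, h3⟩ := Polynomial.lifts_and_natDegree_eq_and_monic hl (hq.map _)
    refine ⟨q', h3, ?_⟩
    change eval₂ θ y q' = 0
    rw [← eval_map, h1, eval_map]
    exact hq0
  have : FaithfulSMul A[X] K := (faithfulSMul_iff_algebraMap_injective _ _).2 hθinj
  have : IsTorsionFree A[X] K := inferInstance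
  set f := minpoly A[X] y with hf
  have hEV : ∀ P : A[X][X], EV j a y P = aeval y P := fun P => rfl
  have hker : ∀ P, EV j a y P = 0 → f ∣ P := fun P hP =>
    minpoly.isIntegrallyClosed_dvd hyint' (by rw [← hEV]; exact hP)
  have hf0 : EV j a y f = 0 := minpoly.aeval _ _
  have hm : f.Monic := minpoly.monic hyint'
  have hEfix : ∀ x ∈ E, σ x = x := by
    intro x hx
    have : E ≤ RingHom.eqLocusField σ (RingHom.id K) := by
      rw [hE, Subfield.closure_le]
      intro x hx
      exact hTσ x hx
    exact this hx
  have hEfrac : ∀ x ∈ E, ∃ D : A[X], D ≠ 0 ∧ ∃ P : A[X], θ D * x = θ P := by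
    intro x hx
    rw [hE, Subfield.mem_closure_iff] at hx
    obtain ⟨u, hu, v, hv, huv⟩ := hx
    obtain ⟨U, rfl⟩ := hTθ hu
    obtain ⟨V, rfl⟩ := hTθ hv
    by_cases hV : V = 0
    · refine ⟨1, one_ne_zero, 0, ?_⟩
      rw [← huv, hV]; simp
    · refine ⟨V, hV, U, ?_⟩
      have : θ V ≠ 0 := fun h => hV (hθinj (by rw [h, map_zero]))
      rw [← huv]; field_simp
  have hEloc : ∀ x ∈ E, x ∈ LocR (RingHom.id A[X]) θ := hEfrac
  have hEloc2 : ∀ x ∈ E, x ∈ LocR (C : A[X] →+* A[X][X]) (EV j a y) := by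
    intro x hx
    obtain ⟨D, hD, P, hP⟩ := hEfrac x hx
    exact ⟨D, hD, C P, by simpa [hθ] using hP⟩
  have hyE : IsIntegral E y := by
    have : IsAlgebraic E (⟨y, hyL⟩ : L) := Algebra.IsAlgebraic.isAlgebraic _
    exact (this.algHom L.val).isIntegral
  have hLloc : ∀ x ∈ L, x ∈ LocR (C : A[X] →+* A[X][X]) (EV j a y) := by
    intro x hx
    rw [hLy, ← IntermediateField.mem_toSubalgebra,
      IntermediateField.adjoin_simple_toSubalgebra_of_isAlgebraic hyE.isAlgebraic,
      Algebra.adjoin_singleton_eq_range_aeval] at hx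
    obtain ⟨q, rfl⟩ := hx
    change aeval y q ∈ _
    rw [aeval_eq_sum_range]
    refine Subring.sum_mem _ fun i _ => ?_
    rw [Algebra.smul_def]
    refine Subring.mul_mem _ (hEloc2 _ (q.coeff i).2) (Subring.pow_mem _ ?_ _)
    exact ⟨1, one_ne_zero, X, by simp⟩
  -- divisibility
  set m := minpoly E y with hmdef
  have hdvd : f.map θ ∣ m.map (algebraMap E K) := by
    obtain ⟨D, hD, h⟩ := LocR_common (RingHom.id A[X]) θ (fun i => (m.coeff i : K))
      (Finset.range (m.natDegree + 1)) fun i _ => hEloc _ (m.coeff i).2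
    choose! P hP using h
    let PP : A[X][X] := ∑ i ∈ Finset.range (m.natDegree + 1), C (P i) * X ^ i
    have hPP : PP.map θ = C (θ D) * m.map (algebraMap E K) := by
      conv_rhs => rw [m.as_sum_range_C_mul_X_pow]
      simp only [PP, Polynomial.map_sum, Polynomial.map_mul, Polynomial.map_pow, Polynomial.map_C,
        Polynomial.map_X, Finset.mul_sum]
      apply Finset.sum_congr rfl
      intro i hi
      rw [← hP i hi, C_mul, mul_assoc]; rfl
    have hz : EV j a y PP = 0 := by
      change eval₂ θ y PP = 0
      rw [← eval_map, hPP, eval_mul, eval_map]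
      have : eval₂ (algebraMap E K) y m = 0 := minpoly.aeval E y
      rw [this, mul_zero]
    have h1 := Polynomial.map_dvd θ (hker _ hz)
    rw [hPP] at h1
    have hu : IsUnit (C (θ D)) :=
      isUnit_C.2 (isUnit_iff_ne_zero.2 fun h => hD (hθinj (by rw [h, map_zero])))
    exact (hu.dvd_mul_left).1 h1
  have hmL : minpoly E (⟨y, hyL⟩ : L) = m :=
    (minpoly.algHom_eq L.val Subtype.val_injective (⟨y, hyL⟩ : L)).symm
  have hmsep : m.Separable := by
    have h1 : IsSeparable E (⟨y, hyL⟩ : L) := Algebra.IsSeparable.isSeparable E _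
    rw [← hmL]; exact h1
  have hfsep : (f.map θ).Separable := (hmsep.map).of_dvd hdvd
  have hdpos : 0 < f.natDegree := minpoly.natDegree_pos hyint'
  have hmd : (f.map θ).natDegree = f.natDegree := hm.natDegree_map θ
  have hder : derivative f ≠ 0 := by
    intro h0
    have h1 : derivative (f.map θ) = 0 := by rw [derivative_map, h0, Polynomial.map_zero]
    have h2 : IsUnit (f.map θ) := by
      have := hfsep
      rw [separable_def, h1, isCoprime_zero_right] at this
      exact this
    have := natDegree_eq_zero_of_isUnit h2
    omega
  obtain ⟨Y, hY⟩ := exists_fin_roots (f.map θ) (hm.map θ) f.natDegree hmd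
  have hyroot : ∃ i, Y i = y := by
    have : eval y (f.map θ) = 0 := by rw [eval_map]; exact hf0
    rw [hY, eval_prod, Finset.prod_eq_zero_iff] at this
    obtain ⟨i, _, hi⟩ := this
    refine ⟨i, ?_⟩
    simp only [eval_sub, eval_X, eval_C] at hi
    exact (sub_eq_zero.1 hi).symm
  have hYroot : ∀ i, eval (Y i) (m.map (algebraMap E K)) = 0 := by
    intro i
    apply eval_eq_zero_of_dvd_of_eval_eq_zero hdvd
    rw [hY, eval_prod]
    exact Finset.prod_eq_zero (Finset.mem_univ i) (by simp)
  have hσY : ∀ i, eval (σ (Y i)) (m.map (algebraMap E K)) = 0 := by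
    intro i
    have h1 := congrArg σ (hYroot i)
    rw [map_zero, eval_map, hom_eval₂] at h1
    have h2 : σ.comp (algebraMap E K) = algebraMap E K := by
      ext x; exact hEfix x x.2
    rw [h2] at h1
    rw [eval_map, h1]
  have hσL : ∀ i, σ (Y i) ∈ L := by
    intro i
    have h1 : ((minpoly E (⟨y, hyL⟩ : L)).map (algebraMap E L)).Splits := hnor.splits _
    rw [hmL] at h1
    have h2 : m.map (algebraMap E L) ≠ 0 := Polynomial.map_ne_zero (minpoly.ne_zero hyE)
    have h3 : ((m.map (algebraMap E L)).map (algebraMap L K)).IsRoot (σ (Y i)) := by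
      rw [Polynomial.map_map, ← IsScalarTower.algebraMap_eq]
      exact hσY i
    obtain ⟨z, hz⟩ := h1.mem_range_of_isRoot h2 h3
    rw [← hz]
    exact z.2
  obtain ⟨D, hD, h⟩ := LocR_common (C : A[X] →+* A[X][X]) (EV j a y) (fun i => σ (Y i))
    Finset.univ fun i _ => hLloc _ (hσL i)
  choose! h hh using h
  obtain ⟨Q, hQ, hP⟩ := LocR_common (C : A[X] →+* A[X][X]) (EV j a y) (fun s => s ^ p ^ r) S
    fun s hs => hLloc _ (hSL s hs)
  refine ⟨y, f, f.natDegree, hdpos, hm, rfl, minpoly.irreducible hyint', hder, hker, Y, hY, hyroot,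
    D, Q, hD, hQ, ⟨h, fun i => ?_⟩, r, fun s hs => ?_⟩
  · simpa using hh i (Finset.mem_univ i)
  · simpa using hP s hs
end C

section FS
variable {K K' : Type*} [Field K] [IsAlgClosed K] [Field K'] [IsAlgClosed K']

theorem FS (p : ℕ) [Fact p.Prime] [CharP K p] [CharP K' p] (σ : K →+* K) (σ' : K' →+* K')
    (hC : Cnt σ') (A : Subfield K) [IsAlgClosed A] (g : A →+* K') (hσA : ∀ c ∈ A, σ c ∈ A)
    (hg : ∀ c : A, σ' (g c) = g ⟨σ c, hσA c c.2⟩) (a : K) (ha : σ a = a)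
    (htr : ∀ P : A[X], P.eval₂ A.subtype a = 0 → P = 0)
    (T : Set K) (hTA : ∀ x ∈ T, x ∈ A ∨ x = a) (hTσ : ∀ x ∈ T, σ x = x)
    (S : Finset K) (hS : ∀ s ∈ S, IsAlgebraic (Subfield.closure T) s) :
    ∃ W : Subring (K × K'), (∀ z ∈ W, z.1 = 0 → z.2 = 0) ∧ (∀ c : A, ((c : K), g c) ∈ W) ∧
      (∀ z ∈ W, (σ z.1, σ' z.2) ∈ W) ∧ ∀ s ∈ S, ∃ s', (s, s') ∈ W := by
  obtain ⟨y, f, d, hd, hm, hfd, hirr, hder, hker, Y, hY, ⟨i, hi⟩, D, Q, hD, hQ, ⟨h, hh⟩, r, hr⟩ :=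
    core_data σ A a htr p T hTA hTσ S hS
  let τ : A →+* A := (σ.comp A.subtype).codRestrict A fun c => hσA c c.2
  have hj : ∀ c, σ (A.subtype c) = A.subtype (τ c) := fun c => rfl
  obtain ⟨a', b', h1, h2, h3, h4, h5⟩ := core_point σ σ' hC A.subtype g τ hj hg a y ha f d hd hm
    hfd hirr hder hker Y hY D Q hD hQ h hh i
  exact core_W p σ σ' A.subtype g τ hj hg a y ha a' b' h1 h2 D Q h3 h4 (h i) (hi ▸ hh i) h5 S r hr
end FS
end FFP

namespace FFP

open Polynomial

section B
variable {K : Type*} [Field K] [IsAlgClosed K]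

/-- the fixed parameters -/
def TT (σ : K →+* K) (A : Subfield K) (a : K) : Set K := insert a {x | x ∈ A ∧ σ x = x}

/-- the next domain -/
noncomputable def BB (σ : K →+* K) (A : Subfield K) (a : K) : Subfield K :=
  (algebraicClosure (Subfield.closure (TT σ A a)) K).toSubfield

variable (σ : K →+* K) (A : Subfield K) (a : K)

lemma mem_BB {x : K} : x ∈ BB σ A a ↔ IsAlgebraic (Subfield.closure (TT σ A a)) x :=
  mem_algebraicClosure_iff

lemma BB_isAlgClosed : IsAlgClosed (BB σ A a) :=
  (algebraicClosure.isAlgClosure (Subfield.closure (TT σ A a)) K).isAlgClosed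

lemma closure_TT_fix (ha : σ a = a) {x : K} (hx : x ∈ Subfield.closure (TT σ A a)) : σ x = x := by
  have : Subfield.closure (TT σ A a) ≤ RingHom.eqLocusField σ (RingHom.id K) := by
    rw [Subfield.closure_le]
    intro x hx
    rcases hx with rfl | hx
    · exact ha
    · exact hx.2
  exact this hx

lemma root_BB (ha : σ a = a) (m : (Subfield.closure (TT σ A a))[X]) (x : K) (hx : aeval x m = 0) :
    aeval (σ x) m = 0 := by
  have h1 := congrArg σ hx
  rw [map_zero, aeval_def, hom_eval₂] at h1
  have h2 : σ.comp (algebraMap (Subfield.closure (TT σ A a)) K) = algebraMap _ K := by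
    ext x; exact closure_TT_fix σ A a ha x.2
  rw [h2] at h1
  exact h1

lemma BB_stable (ha : σ a = a) {x : K} (hx : x ∈ BB σ A a) : σ x ∈ BB σ A a := by
  rw [mem_BB] at hx ⊢
  obtain ⟨m, hm, h⟩ := hx
  exact ⟨m, hm, root_BB σ A a ha m x h⟩

lemma BB_orbit (ha : σ a = a) {x : K} (hx : x ∈ BB σ A a) : ∃ n, 0 < n ∧ σ^[n] x = x := by
  rw [mem_BB] at hx
  obtain ⟨m, hm, h⟩ := hx
  have hit : ∀ n, σ^[n] x ∈ m.rootSet K := by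
    intro n
    rw [mem_rootSet]
    refine ⟨hm, ?_⟩
    induction n with
    | zero => exact h
    | succ n ih =>
      rw [Function.iterate_succ_apply']
      exact root_BB σ A a ha m _ ih
  have hfin : (m.rootSet K).Finite := rootSet_finite m K
  obtain ⟨i, j, hij, heq⟩ := Set.Finite.exists_lt_map_eq_of_forall_mem (f := fun n => σ^[n] x)
    hit hfin
  refine ⟨j - i, by omega, ?_⟩
  have hinj : Function.Injective (σ^[i]) := σ.injective.iterate i
  apply hinj
  rw [← Function.iterate_add_apply, show i + (j - i) = j by omega]
  exact heq.symm

lemma BB_countable (hA : (A : Set K).Countable) : ((BB σ A a : Subfield K) : Set K).Countable := by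
  have h1 : (TT σ A a).Countable := (hA.mono fun x hx => hx.1).insert a
  have h2 : Countable (Subfield.closure (TT σ A a)) := by
    rw [← Cardinal.mk_le_aleph0_iff]
    refine (Subfield.cardinalMk_closure_le_max _).trans (max_le ?_ le_rfl)
    exact Cardinal.le_aleph0_iff_set_countable.2 h1
  have h3 := Algebraic.countable (Subfield.closure (TT σ A a)) K
  refine h3.mono fun x hx => (mem_BB σ A a).1 hx

lemma a_mem_BB : a ∈ BB σ A a := by
  rw [mem_BB]
  exact isAlgebraic_algebraMap (⟨a, Subfield.subset_closure (Set.mem_insert _ _)⟩ :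
    Subfield.closure (TT σ A a))

lemma le_BB (hσ : ∀ c ∈ A, σ c ∈ A) (horb : ∀ c ∈ A, ∃ n, 0 < n ∧ σ^[n] c = c) : A ≤ BB σ A a := by
  intro c hc
  obtain ⟨n, hn, hnc⟩ := horb c hc
  have hit : ∀ i, σ^[i] c ∈ A := by
    intro i
    induction i with
    | zero => exact hc
    | succ i ih => rw [Function.iterate_succ_apply']; exact hσ _ ih
  let q : K[X] := ∏ i ∈ Finset.range n, (X - C (σ^[i] c))
  have hq : q.Monic := monic_prod_of_monic _ _ fun i _ => monic_X_sub_C _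
  have hqσ : q.map σ = q := by
    simp only [q, Polynomial.map_prod, Polynomial.map_sub, Polynomial.map_X, Polynomial.map_C,
      ← Function.iterate_succ_apply' (f := σ)]
    obtain ⟨m, rfl⟩ : ∃ m, n = m + 1 := ⟨n - 1, by omega⟩
    rw [Finset.prod_range_succ, Finset.prod_range_succ' (fun i => X - C (σ^[i] c)), hnc]
    rfl
  have hqA : ∀ i, q.coeff i ∈ A := by
    have : q ∈ Polynomial.lifts A.subtype := by
      apply Subsemiring.prod_mem
      intro i _
      exact ⟨X - C ⟨σ^[i] c, hit i⟩, by simp⟩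
    rw [lifts_iff_coeff_lifts] at this
    intro i
    obtain ⟨z, hz⟩ := this i
    rw [← hz]; exact z.2
  have hqE : q ∈ Polynomial.lifts (algebraMap (Subfield.closure (TT σ A a)) K) := by
    rw [lifts_iff_coeff_lifts]
    intro i
    refine ⟨⟨q.coeff i, Subfield.subset_closure (Set.mem_insert_of_mem _ ⟨hqA i, ?_⟩)⟩, rfl⟩
    rw [← coeff_map, hqσ]
  obtain ⟨m, hm⟩ := hqE
  rw [mem_BB]
  refine ⟨m, ?_, ?_⟩
  · rintro rfl
    simp at hm
    exact hq.ne_zero hm.symm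
  · rw [aeval_def, ← eval_map]
    change eval c (mapRingHom _ m) = 0
    rw [hm, eval_prod]
    exact Finset.prod_eq_zero (Finset.mem_range.2 hn) (by simp)

lemma transcendental_of_not_mem [IsAlgClosed A] (ha : a ∉ A) (P : A[X])
    (hP : P.eval₂ A.subtype a = 0) : P = 0 := by
  by_contra h0
  obtain ⟨z, hz⟩ := (IsAlgClosed.splits P).mem_range_of_isRoot h0 (i := A.subtype) (x := a)
    (by rw [IsRoot, eval_map]; exact hP)
  exact ha (hz ▸ z.2)
end B

section sat
open Filter
lemma sat {F : Type*} [Nonempty F] (Ψ : ℕ → ℕ → (ℕ → F) → Prop)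
    (hmono : ∀ m n k x, m ≤ n → Ψ n k x → Ψ m k x)
    (h : ∀ n, ∀ᶠ k in (hyperfilter ℕ : Filter ℕ), ∃ x, Ψ n k x) :
    ∃ x : ℕ → ℕ → F, ∀ n, ∀ᶠ k in (hyperfilter ℕ : Filter ℕ), Ψ n k (x k) := by
  classical
  have h1 : ∀ k, ∃ x : ℕ → F, ∀ n ≤ k, (∃ y, Ψ n k y) → Ψ n k x := by
    intro k
    by_cases hS : ∃ n ≤ k, ∃ y, Ψ n k y
    · obtain ⟨n0, hn0, hy0⟩ := hS
      have := Nat.findGreatest_spec (P := fun n => ∃ y, Ψ n k y) hn0 hy0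
      obtain ⟨x, hx⟩ := this
      refine ⟨x, fun n hn hy => ?_⟩
      exact hmono _ _ _ _ (Nat.le_findGreatest (P := fun n => ∃ y, Ψ n k y) hn hy) hx
    · exact ⟨fun _ => Classical.arbitrary F, fun n hn hy => absurd ⟨n, hn, hy⟩ hS⟩
  choose x hx using h1
  refine ⟨x, fun n => ?_⟩
  filter_upwards [h n, Nat.hyperfilter_le_atTop (eventually_ge_atTop n)] with k hk hnk
  exact hx k n hnk hk
end sat

/-- partial isomorphisms -/
structure PI {K K' : Type*} [Field K] [Field K'] (σ : K →+* K) (σ' : K' →+* K') where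
  A : Subfield K
  A' : Subfield K'
  g : A ≃+* A'
  clo : IsAlgClosed A
  cnt : (A : Set K).Countable
  stab : ∀ c ∈ A, σ c ∈ A
  comm : ∀ c : A, σ' (g c) = g ⟨σ c, stab c c.2⟩
  orb : ∀ c ∈ A, ∃ n, 0 < n ∧ σ^[n] c = c

namespace PI
universe u
variable {K K' : Type u} [Field K] [Field K'] {σ : K →+* K} {σ' : K' →+* K'}

/-- the graph -/
def rel (P : PI σ σ') (x : K) (x' : K') : Prop := ∃ h : x ∈ P.A, (P.g ⟨x, h⟩ : K') = x'

lemma rel_self (P : PI σ σ') (c : P.A) : P.rel c (P.g c) := ⟨c.2, rfl⟩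

lemma comm_symm (P : PI σ σ') (c : P.A') : (P.g.symm c : K) ∈ P.A ∧
    ∃ h : σ' c ∈ P.A', P.g.symm ⟨σ' c, h⟩ = ⟨σ (P.g.symm c), P.stab _ (P.g.symm c).2⟩ := by
  refine ⟨(P.g.symm c).2, ?_⟩
  have := P.comm (P.g.symm c)
  rw [RingEquiv.apply_symm_apply] at this
  have h : σ' c ∈ P.A' := by rw [this]; exact Subtype.prop _
  refine ⟨h, ?_⟩
  rw [RingEquiv.symm_apply_eq]
  exact Subtype.ext this

/-- inverse -/
def symm (P : PI σ σ') : PI σ' σ where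
  A := P.A'
  A' := P.A
  g := P.g.symm
  clo := have := P.clo; IsAlgClosed.of_ringEquiv _ _ P.g
  cnt := by
    have : Countable P.A := P.cnt
    exact (P.g.toEquiv.symm.injective.countable : Countable P.A')
  stab := fun c hc => (P.comm_symm ⟨c, hc⟩).2.1
  comm := fun c => by
    obtain ⟨_, h, h2⟩ := P.comm_symm c
    rw [h2]
  orb := by
    intro c hc
    obtain ⟨n, hn, h⟩ := P.orb _ (P.g.symm ⟨c, hc⟩).2
    refine ⟨n, hn, ?_⟩
    have key : ∀ m, ∃ h : σ'^[m] c ∈ P.A', (P.g.symm ⟨σ'^[m] c, h⟩ : K) =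
        σ^[m] (P.g.symm ⟨c, hc⟩) := by
      intro m
      induction m with
      | zero => exact ⟨hc, rfl⟩
      | succ m ih =>
        obtain ⟨h1, h2⟩ := ih
        obtain ⟨_, h3, h4⟩ := P.comm_symm ⟨_, h1⟩
        simp only [Function.iterate_succ_apply']
        refine ⟨h3, ?_⟩
        rw [h4]
        simp only [h2]
    obtain ⟨h1, h2⟩ := key n
    rw [h] at h2
    have := P.g.symm.injective (Subtype.ext h2)
    exact congrArg Subtype.val this

lemma symm_rel (P : PI σ σ') {x x'} : P.symm.rel x' x ↔ P.rel x x' := by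
  constructor
  · rintro ⟨h, rfl⟩
    refine ⟨(P.g.symm ⟨x', h⟩).2, ?_⟩
    change (P.g (P.g.symm ⟨x', h⟩) : K') = x'
    simp
  · rintro ⟨h, rfl⟩
    refine ⟨(P.g ⟨x, h⟩).2, ?_⟩
    change (P.g.symm (P.g ⟨x, h⟩) : K) = x
    simp

lemma rel_fun (P : PI σ σ') {x x1 x2} (h1 : P.rel x x1) (h2 : P.rel x x2) : x1 = x2 := by
  obtain ⟨_, rfl⟩ := h1
  obtain ⟨_, rfl⟩ := h2
  rfl

lemma rel_inj (P : PI σ σ') {x y x'} (h1 : P.rel x x') (h2 : P.rel y x') : x = y :=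
  P.symm.rel_fun (P.symm_rel.2 h1) (P.symm_rel.2 h2)

lemma rel_σ (P : PI σ σ') {x x'} (h : P.rel x x') : P.rel (σ x) (σ' x') := by
  obtain ⟨h, rfl⟩ := h
  exact ⟨P.stab _ h, (P.comm ⟨x, h⟩).symm⟩

lemma rel_add (P : PI σ σ') {x x' y y'} (h : P.rel x x') (h' : P.rel y y') :
    P.rel (x + y) (x' + y') := by
  obtain ⟨h, rfl⟩ := h
  obtain ⟨h', rfl⟩ := h'
  exact ⟨add_mem h h', congrArg Subtype.val (map_add P.g ⟨x, h⟩ ⟨y, h'⟩)⟩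

lemma rel_mul (P : PI σ σ') {x x' y y'} (h : P.rel x x') (h' : P.rel y y') :
    P.rel (x * y) (x' * y') := by
  obtain ⟨h, rfl⟩ := h
  obtain ⟨h', rfl⟩ := h'
  exact ⟨mul_mem h h', congrArg Subtype.val (map_mul P.g ⟨x, h⟩ ⟨y, h'⟩)⟩

lemma rel_neg (P : PI σ σ') {x x'} (h : P.rel x x') : P.rel (-x) (-x') := by
  obtain ⟨h, rfl⟩ := h
  exact ⟨neg_mem h, congrArg Subtype.val (map_neg P.g ⟨x, h⟩)⟩

lemma rel_zero (P : PI σ σ') : P.rel 0 0 := ⟨zero_mem _, congrArg Subtype.val (map_zero P.g)⟩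
lemma rel_one (P : PI σ σ') : P.rel 1 1 := ⟨one_mem _, congrArg Subtype.val (map_one P.g)⟩

/-- build from an extended homomorphism -/
lemma build [IsAlgClosed K] (P : PI σ σ') (a : K) (ha : σ a = a) (g' : BB σ P.A a →+* K')
    (hg' : ∀ x : BB σ P.A a, ∀ hx : (x : K) ∈ P.A, g' x = P.g ⟨x, hx⟩)
    (hσ : ∀ x : BB σ P.A a, σ' (g' x) = g' ⟨σ x, BB_stable σ P.A a ha x.2⟩) :
    ∃ Q : PI σ σ', (∀ x x', P.rel x x' → Q.rel x x') ∧ ∃ a', Q.rel a a' := by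
  let Q : PI σ σ' :=
    { A := BB σ P.A a
      A' := g'.fieldRange
      g := g'.rangeRestrictFieldEquiv
      clo := BB_isAlgClosed σ P.A a
      cnt := BB_countable σ P.A a P.cnt
      stab := fun c hc => BB_stable σ P.A a ha hc
      comm := hσ
      orb := fun c hc => BB_orbit σ P.A a ha hc }
  refine ⟨Q, ?_, ?_⟩
  · rintro x x' ⟨h, rfl⟩
    exact ⟨le_BB σ P.A a P.stab P.orb h, hg' ⟨x, _⟩ h⟩
  · exact ⟨_, a_mem_BB σ P.A a, rfl⟩

end PI

section ext
open Filter
variable {F : Type*} [Field F] (p : ℕ) [Fact p.Prime] [CharP F p] [IsAlgClosed F]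

theorem Cnt_Om (e : ℕ → ℕ) (he : ∀ n, ∀ᶠ k in (hyperfilter ℕ : Filter ℕ), n ≤ e k) :
    Cnt (sg (F := F) p e) := fun d hd f hm hfd hirr hder D E hD hE h hyp i =>
  count_Om p e he d hd f hm hfd hirr hder D E hD hE h hyp i

theorem PI.extend (e' : ℕ → ℕ) (he' : ∀ n, ∀ᶠ k in (hyperfilter ℕ : Filter ℕ), n ≤ e' k)
    (σ σ' : Om F →+* Om F) (hσ' : σ' = sg (F := F) p e')
    (P : PI σ σ') (a : Om F) (ha : σ a = a) :
    ∃ Q : PI σ σ', (∀ x x', P.rel x x' → Q.rel x x') ∧ ∃ a', Q.rel a a' := by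
  classical
  by_cases haA : a ∈ P.A
  · exact ⟨P, fun _ _ h => h, _, haA, rfl⟩
  have := P.clo
  have htr := transcendental_of_not_mem P.A a haA
  let B := BB σ P.A a
  have hBc : Countable B := BB_countable σ P.A a P.cnt
  obtain ⟨b, hb⟩ := exists_surjective_nat B
  have hlift : ∀ y : Om F, ∃ x : ℕ → F, pi F x = y := fun y => pi_surj y
  choose lf hlf using hlift
  let Ψ : ℕ → ℕ → (ℕ → F) → Prop := fun n k x =>
    ∀ i ∈ Finset.range n, ∀ j ∈ Finset.range n, ∀ l ∈ Finset.range n,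
      (b i + b j = b l → x i + x j = x l) ∧ (b i * b j = b l → x i * x j = x l) ∧
      (∀ h : (b i : Om F) ∈ P.A, x i = lf (P.g ⟨b i, h⟩) k) ∧
      (σ (b i) = b j → x i ^ p ^ e' k = x j)
  have hsat := sat Ψ ?_ ?_
  · obtain ⟨x, hx⟩ := hsat
    let β : ℕ → Om F := fun i => pi F fun k => x k i
    have hx' : ∀ i j l, ∀ᶠ k in (hyperfilter ℕ : Filter ℕ),
      (b i + b j = b l → x k i + x k j = x k l) ∧ (b i * b j = b l → x k i * x k j = x k l) ∧
      (∀ h : (b i : Om F) ∈ P.A, x k i = lf (P.g ⟨b i, h⟩) k) ∧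
      (σ (b i) = b j → x k i ^ p ^ e' k = x k j) := by
      intro i j l
      filter_upwards [hx (i + j + l + 1)] with k hk
      exact hk i (Finset.mem_range.2 (by omega)) j (Finset.mem_range.2 (by omega)) l
        (Finset.mem_range.2 (by omega))
    have hadd : ∀ i j l, b i + b j = b l → β i + β j = β l := by
      intro i j l h
      simp only [β, ← map_add, pi_eq_iff]
      filter_upwards [hx' i j l] with k hk
      exact hk.1 h
    have hmul : ∀ i j l, b i * b j = b l → β i * β j = β l := by
      intro i j l h
      simp only [β, ← map_mul, pi_eq_iff]
      filter_upwards [hx' i j l] with k hk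
      exact hk.2.1 h
    have hcon : ∀ i, ∀ h : (b i : Om F) ∈ P.A, β i = P.g ⟨b i, h⟩ := by
      intro i h
      rw [← hlf (P.g ⟨b i, h⟩)]
      simp only [β, pi_eq_iff]
      filter_upwards [hx' i i i] with k hk
      exact hk.2.2.1 h
    have hsig : ∀ i j, σ (b i) = b j → σ' (β i) = β j := by
      intro i j h
      simp only [β, hσ', sg_pi, pi_eq_iff]
      filter_upwards [hx' i j j] with k hk
      exact hk.2.2.2 h
    let idx := Function.surjInv hb
    have hidx : ∀ z, b (idx z) = z := Function.surjInv_eq hb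
    have h0 : ((b (idx 0)) : Om F) ∈ P.A := by rw [hidx]; exact zero_mem P.A
    have h1 : ((b (idx 1)) : Om F) ∈ P.A := by rw [hidx]; exact one_mem P.A
    let g' : B →+* Om F :=
      { toFun := fun z => β (idx z)
        map_zero' := by
          have := hadd (idx 0) (idx 0) (idx 0) (by simp [hidx])
          simpa using this
        map_one' := by
          rw [hcon _ h1]
          have : (⟨b (idx 1), h1⟩ : P.A) = 1 := Subtype.ext (by simp [hidx])
          rw [this, map_one]; rfl
        map_add' := fun u v => (hadd _ _ _ (by simp [hidx])).symm
        map_mul' := fun u v => (hmul _ _ _ (by simp [hidx])).symm }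
    refine PI.build P a ha g' ?_ ?_
    · intro z hz
      have hz' : (b (idx z) : Om F) ∈ P.A := by rw [hidx]; exact hz
      change β (idx z) = _
      rw [hcon _ hz']
      congr 2
      exact Subtype.ext (by simp [hidx])
    · intro z
      change σ' (β (idx z)) = β (idx _)
      apply hsig
      simp [hidx]
  · intro m n k x hmn h i hi j hj l hl
    have hr := Finset.range_mono hmn
    exact h i (hr hi) j (hr hj) l (hr hl)
  · intro n
    have hgc : ∀ c : P.A, σ' ((P.A'.subtype.comp (P.g : P.A →+* P.A')) c) =
        (P.A'.subtype.comp (P.g : P.A →+* P.A')) ⟨σ c, P.stab c c.2⟩ := fun c => P.comm c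
    obtain ⟨W, hW1, hW2, hW3, hW4⟩ := FS p σ σ' (hσ' ▸ Cnt_Om p e' he') P.A
      (P.A'.subtype.comp (P.g : P.A →+* P.A')) P.stab hgc a ha htr
      (TT σ P.A a) (by
        rintro x (rfl | hx)
        · exact Or.inr rfl
        · exact Or.inl hx.1) (by
        rintro x (rfl | hx)
        · exact ha
        · exact hx.2) ((Finset.range n).image fun i => (b i : Om F)) (by
        intro s hs
        obtain ⟨i, _, rfl⟩ := Finset.mem_image.1 hs
        exact (mem_BB σ P.A a).1 (b i).2)
    have hfun : ∀ u v v', (u, v) ∈ W → (u, v') ∈ W → v = v' := by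
      intro u v v' h h'
      have := hW1 _ (W.sub_mem h h') (by simp)
      exact sub_eq_zero.1 this
    have : ∀ i ∈ Finset.range n, ∃ s', ((b i : Om F), s') ∈ W := fun i hi =>
      hW4 _ (Finset.mem_image_of_mem _ hi)
    choose! β hβ using this
    suffices ∀ᶠ k in (hyperfilter ℕ : Filter ℕ), Ψ n k (fun i => lf (β i) k) from
      this.mono fun k hk => ⟨_, hk⟩
    simp only [Ψ, eventually_all_finset]
    intro i hi j hj l hl
    refine Filter.Eventually.and ?_ (Filter.Eventually.and ?_ (Filter.Eventually.and ?_ ?_))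
    · by_cases h : b i + b j = b l
      · have := hfun _ _ _ (W.add_mem (hβ i hi) (hβ j hj)) (by
          have := hβ l hl
          rw [← h] at this
          exact this)
        simp only [h, true_imp_iff]
        rw [← hlf (β i), ← hlf (β j), ← hlf (β l)] at this
        exact (pi_eq_iff _ _).1 this
      · simp [h]
    · by_cases h : b i * b j = b l
      · have := hfun _ _ _ (W.mul_mem (hβ i hi) (hβ j hj)) (by
          have := hβ l hl
          rw [← h] at this
          exact this)
        simp only [h, true_imp_iff]
        rw [← hlf (β i), ← hlf (β j), ← hlf (β l)] at this
        exact (pi_eq_iff _ _).1 this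
      · simp [h]
    · by_cases h : (b i : Om F) ∈ P.A
      · have := hfun _ _ _ (hβ i hi) (hW2 ⟨b i, h⟩)
        simp only [h, forall_true_left]
        exact Filter.Eventually.of_forall fun k => by rw [this]; rfl
      · simp [h]
    · by_cases h : σ (b i) = b j
      · have := hfun _ _ _ (hW3 _ (hβ i hi)) (by
          have := hβ j hj
          rw [← h] at this
          exact this)
        simp only [h, true_imp_iff]
        simp only at this
        rw [← hlf (β i), ← hlf (β j), hσ', sg_pi] at this
        exact (pi_eq_iff _ _).1 this
      · simp [h]
end ext
end FFP

namespace FFP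

open Polynomial Filter FirstOrder

section logic
attribute [local instance] FirstOrder.Ring.compatibleRingOfRing

variable {F : Type*} [Field F] (p : ℕ) [Fact p.Prime] [CharP F p] [IsAlgClosed F]

/-- fixed field of a power of Frobenius -/
noncomputable def Fix (F : Type*) [Field F] (p : ℕ) [Fact p.Prime] [CharP F p] (e : ℕ) :
    Subfield F :=
  have : ExpChar F p := ExpChar.prime Fact.out
  RingHom.eqLocusField (iterateFrobenius F p e) (RingHom.id F)

lemma mem_Fix (e : ℕ) (x : F) : x ∈ Fix F p e ↔ x ^ p ^ e = x := by
  have : ExpChar F p := ExpChar.prime Fact.out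
  change iterateFrobenius F p e x = x ↔ _
  rw [iterateFrobenius_def]

/-- germ of a sequence -/
noncomputable def gm (e : ℕ → ℕ) (x : ∀ k, Fix F p (e k)) : Om F := pi F fun k => (x k : F)

lemma sg_gm (e : ℕ → ℕ) (x : ∀ k, Fix F p (e k)) : sg p e (gm p e x) = gm p e x := by
  rw [gm, sg_pi]
  congr 1
  funext k
  exact (mem_Fix p _ _).1 (x k).2

lemma exists_gm (e : ℕ → ℕ) (a : Om F) (ha : sg p e a = a) : ∃ x, gm p e x = a := by
  classical
  obtain ⟨y, rfl⟩ := pi_surj a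
  rw [sg_pi, pi_eq_iff] at ha
  refine ⟨fun k => if h : y k ^ p ^ e k = y k then ⟨y k, (mem_Fix p _ _).2 h⟩ else 0, ?_⟩
  rw [gm, pi_eq_iff]
  filter_upwards [ha] with k hk
  simp [hk]

lemma rel_term (e e' : ℕ → ℕ) (P : PI (sg (F := F) p e) (sg (F := F) p e')) {n : ℕ}
    (x : Fin n → ∀ k, Fix F p (e k)) (x' : Fin n → ∀ k, Fix F p (e' k))
    (hx : ∀ i, P.rel (gm p e (x i)) (gm p e' (x' i)))
    (t : Language.ring.Term (Empty ⊕ Fin n)) :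
    P.rel (gm p e fun k => t.realize (Sum.elim (default : Empty → Fix F p (e k)) fun i => x i k))
      (gm p e' fun k => t.realize
        (Sum.elim (default : Empty → Fix F p (e' k)) fun i => x' i k)) := by
  induction t with
  | var i =>
    rcases i with i | i
    · exact i.elim
    · exact hx i
  | func f ts ih =>
    cases f with
    | add =>
      have h := P.rel_add (ih 0) (ih 1)
      convert h using 1 <;>
      · rw [gm, gm, gm, ← map_add]
        congr 1
    | mul =>
      have h := P.rel_mul (ih 0) (ih 1)
      convert h using 1 <;>
      · rw [gm, gm, gm, ← map_mul]
        congr 1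
    | neg =>
      have h := P.rel_neg (ih 0)
      convert h using 1 <;>
      · rw [gm, gm, ← map_neg]
        congr 1
    | zero =>
      have h := P.rel_zero
      convert h using 1 <;>
      · rw [gm, ← map_zero (pi F)]
        congr 1
    | one =>
      have h := P.rel_one
      convert h using 1 <;>
      · rw [gm, ← map_one (pi F)]
        congr 1

theorem transfer {n : ℕ} (φ : Language.ring.BoundedFormula Empty n) :
    ∀ (e e' : ℕ → ℕ) (_ : ∀ n, ∀ᶠ k in (hyperfilter ℕ : Filter ℕ), n ≤ e k)
    (_ : ∀ n, ∀ᶠ k in (hyperfilter ℕ : Filter ℕ), n ≤ e' k)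
    (P : PI (sg (F := F) p e) (sg (F := F) p e'))
    (x : Fin n → ∀ k, Fix F p (e k)) (x' : Fin n → ∀ k, Fix F p (e' k))
    (_ : ∀ i, P.rel (gm p e (x i)) (gm p e' (x' i))),
    (∀ᶠ k in (hyperfilter ℕ : Filter ℕ),
      φ.Realize (default : Empty → Fix F p (e k)) fun i => x i k) →
    (∀ᶠ k in (hyperfilter ℕ : Filter ℕ),
      φ.Realize (default : Empty → Fix F p (e' k)) fun i => x' i k) := by
  induction φ with
  | falsum =>
    intro e e' he he' P x x' hx h
    exact h.mono fun k hk => hk.elim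
  | equal t1 t2 =>
    intro e e' he he' P x x' hx h
    have h1 := rel_term p e e' P x x' hx t1
    have h2 := rel_term p e e' P x x' hx t2
    have h3 : (gm p e fun k => t1.realize
        (Sum.elim (default : Empty → Fix F p (e k)) fun i => x i k)) =
        (gm p e fun k => t2.realize
        (Sum.elim (default : Empty → Fix F p (e k)) fun i => x i k)) := by
      rw [gm, gm, pi_eq_iff]
      exact h.mono fun k hk => congrArg Subtype.val hk
    rw [h3] at h1
    have h4 := P.rel_fun h1 h2
    rw [gm, gm, pi_eq_iff] at h4
    exact h4.mono fun k hk => Subtype.ext hk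
  | rel R ts => exact isEmptyElim R
  | imp f1 f2 ih1 ih2 =>
    intro e e' he he' P x x' hx h
    simp only [Language.BoundedFormula.realize_imp] at h ⊢
    rw [Ultrafilter.eventually_imp] at h ⊢
    intro h1
    exact ih2 e e' he he' P x x' hx
      (h (ih1 e' e he' he P.symm x' x (fun i => P.symm_rel.2 (hx i)) h1))
  | all f ih =>
    intro e e' he he' P x x' hx h
    by_contra hcon
    rw [← Ultrafilter.eventually_not] at hcon
    simp only [Language.BoundedFormula.realize_all] at h hcon
    push Not at hcon
    have : ∀ k, ∃ y : Fix F p (e' k), (∃ y' : Fix F p (e' k), ¬ f.Realize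
        (default : Empty → Fix F p (e' k)) (Fin.snoc (fun i => x' i k) y')) →
        ¬ f.Realize (default : Empty → Fix F p (e' k)) (Fin.snoc (fun i => x' i k) y) := by
      intro k
      by_cases hy : ∃ y' : Fix F p (e' k), ¬ f.Realize
        (default : Empty → Fix F p (e' k)) (Fin.snoc (fun i => x' i k) y')
      · obtain ⟨y, hy⟩ := hy
        exact ⟨y, fun _ => hy⟩
      · exact ⟨0, fun h => absurd h hy⟩
    choose y' hy' using this
    obtain ⟨Q, hPQ, a, ha⟩ := PI.extend p e he (sg p e') (sg p e) rfl P.symm (gm p e' y')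
      (sg_gm p e' y')
    have hQ : Q.symm.rel a (gm p e' y') := Q.symm_rel.2 ha
    have hafix : sg p e a = a := by
      have h1 := Q.rel_σ ha
      rw [sg_gm] at h1
      exact Q.rel_fun h1 ha
    obtain ⟨y, rfl⟩ := exists_gm p e a hafix
    have hs : ∀ k, (fun i => (Fin.snoc (α := fun _ => ∀ k, Fix F p (e k)) x y : _) i k) =
        Fin.snoc (fun i => x i k) (y k) := by
      intro k
      funext i
      refine Fin.lastCases ?_ (fun i => ?_) i <;> simp
    have hs' : ∀ k, (fun i => (Fin.snoc (α := fun _ => ∀ k, Fix F p (e' k)) x' y' : _) i k) =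
        Fin.snoc (fun i => x' i k) (y' k) := by
      intro k
      funext i
      refine Fin.lastCases ?_ (fun i => ?_) i <;> simp
    have key := ih e e' he he' Q.symm (Fin.snoc x y) (Fin.snoc x' y') ?_ ?_
    · obtain ⟨k, hk1, hk2⟩ := (hcon.and key).exists
      rw [hs'] at hk2
      exact hy' k hk1 hk2
    · intro i
      refine Fin.lastCases ?_ (fun i => ?_) i
      · simpa using hQ
      · simpa using Q.symm_rel.2 (hPQ _ _ (P.symm_rel.2 (hx i)))
    · filter_upwards [h] with k hk
      rw [hs]
      exact hk _

theorem transfer_sentence (e e' : ℕ → ℕ) (he : ∀ n, ∀ᶠ k in (hyperfilter ℕ : Filter ℕ), n ≤ e k)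
    (he' : ∀ n, ∀ᶠ k in (hyperfilter ℕ : Filter ℕ), n ≤ e' k)
    (P : PI (sg (F := F) p e) (sg (F := F) p e')) (θ : Language.ring.Sentence)
    (h : ∀ᶠ k in (hyperfilter ℕ : Filter ℕ), Fix F p (e k) ⊨ θ) :
    ∀ᶠ k in (hyperfilter ℕ : Filter ℕ), Fix F p (e' k) ⊨ θ := by
  have := transfer p θ e e' he he' P (fun i => i.elim0) (fun i => i.elim0) (fun i => i.elim0) ?_
  · refine this.mono fun k hk => ?_
    unfold Language.Sentence.Realize Language.Formula.Realize
    convert hk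
  · refine h.mono fun k hk => ?_
    unfold Language.Sentence.Realize Language.Formula.Realize at hk
    convert hk

end logic

section base
variable (p : ℕ) [Fact p.Prime]

lemma exists_period (x : AlgebraicClosure (ZMod p)) : ∃ n, 0 < n ∧ x ^ p ^ n = x := by
  have hx : IsIntegral (ZMod p) x := Algebra.IsIntegral.isIntegral x
  have := IntermediateField.adjoin.finiteDimensional hx
  let L := IntermediateField.adjoin (ZMod p) {x}
  have : Finite L := Module.finite_of_finite (ZMod p)
  let _ : Fintype L := Fintype.ofFinite L
  obtain ⟨n, hp, hn⟩ := FiniteField.card L p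
  refine ⟨n, n.pos, ?_⟩
  have h := FiniteField.pow_card (⟨x, IntermediateField.mem_adjoin_simple_self _ x⟩ : L)
  rw [hn] at h
  exact congrArg Subtype.val h

lemma period_mul {F : Type*} [Field F] (x : F) (n m : ℕ) (h : x ^ p ^ n = x) :
    x ^ p ^ (n * m) = x := by
  induction m with
  | zero => simp
  | succ m ih => rw [Nat.mul_succ, pow_add, pow_mul, ih, h]

/-- constants -/
noncomputable def cst : AlgebraicClosure (ZMod p) →+* Om (AlgebraicClosure (ZMod p)) :=
  (pi _).comp (Pi.constRingHom ℕ _)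

lemma cst_apply (x) : cst p x = pi _ (fun _ => x) := rfl

lemma sg_iter_cst (e : ℕ → ℕ) (x) (m : ℕ) :
    (sg p e)^[m] (cst p x) = pi _ (fun k => x ^ p ^ (e k * m)) := by
  induction m with
  | zero => simp [cst_apply]
  | succ m ih =>
    rw [Function.iterate_succ_apply', ih, sg_pi]
    congr 1
    funext k
    rw [← pow_mul, ← pow_add, Nat.mul_succ]

/-- the base partial isomorphism -/
lemma base_PI (e e' : ℕ → ℕ) (hee : ∀ k, e' k = e k + k.factorial) :
    Nonempty (PI (sg (F := AlgebraicClosure (ZMod p)) p e)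
      (sg (F := AlgebraicClosure (ZMod p)) p e')) := by
  have hp1 : 1 < p := (Fact.out : p.Prime).one_lt
  refine ⟨{
    A := (cst p).fieldRange
    A' := (cst p).fieldRange
    g := RingEquiv.refl _
    clo := IsAlgClosed.of_ringEquiv _ _ (cst p).rangeRestrictFieldEquiv
    cnt := ?_
    stab := ?_
    comm := ?_
    orb := ?_ }⟩
  · have h1 := Algebraic.countable (ZMod p) (AlgebraicClosure (ZMod p))
    have h2 : Countable (AlgebraicClosure (ZMod p)) := by
      rw [← Set.countable_univ_iff]
      exact h1.mono fun x _ => Algebra.IsAlgebraic.isAlgebraic x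
    rw [RingHom.coe_fieldRange]
    exact Set.countable_range _
  · rintro _ ⟨x, rfl⟩
    obtain ⟨n, hn, hx⟩ := exists_period p x
    have h0 : (X ^ p ^ n - X : (AlgebraicClosure (ZMod p))[X]) ≠ 0 :=
      FiniteField.X_pow_card_pow_sub_X_ne_zero _ hn.ne' hp1
    have := (IsAlgClosed.splits (X ^ p ^ n - X : (AlgebraicClosure (ZMod p))[X])).mem_range_of_isRoot
      h0 (i := cst p) (x := sg p e (cst p x)) (by
        simp only [IsRoot, Polynomial.map_sub, Polynomial.map_pow, Polynomial.map_X, eval_sub,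
          eval_pow, eval_X]
        rw [← map_pow, ← map_pow, hx, sub_self])
    exact this
  · rintro ⟨_, x, rfl⟩
    obtain ⟨n, hn, hx⟩ := exists_period p x
    change sg p e' (cst p x) = sg p e (cst p x)
    rw [cst_apply, sg_pi, sg_pi, pi_eq_iff]
    filter_upwards [Nat.hyperfilter_le_atTop (eventually_ge_atTop n)] with k hk
    obtain ⟨m, hm⟩ := Nat.dvd_factorial hn hk
    rw [hee, add_comm, pow_add, pow_mul, hm, period_mul p x n m hx]
  · rintro _ ⟨x, rfl⟩
    obtain ⟨n, hn, hx⟩ := exists_period p x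
    refine ⟨n, hn, ?_⟩
    rw [sg_iter_cst, cst_apply]
    congr 1
    funext k
    rw [mul_comm, period_mul p x n _ hx]

lemma galois_equiv (e : ℕ) (he : e ≠ 0) :
    Nonempty (GaloisField p e ≃+* Fix (AlgebraicClosure (ZMod p)) p e) := by
  have hp1 : 1 < p := (Fact.out : p.Prime).one_lt
  let ι : GaloisField p e →ₐ[ZMod p] AlgebraicClosure (ZMod p) := IsAlgClosed.lift
  have h : (ι : GaloisField p e →+* AlgebraicClosure (ZMod p)).fieldRange =
      Fix (AlgebraicClosure (ZMod p)) p e := by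
    apply le_antisymm
    · rintro _ ⟨x, rfl⟩
      rw [mem_Fix, ← map_pow]
      congr 1
      let _ : Fintype (GaloisField p e) := Fintype.ofFinite _
      have := FiniteField.pow_card x
      rwa [← Nat.card_eq_fintype_card, GaloisField.card p e he] at this
    · intro x hx
      rw [mem_Fix] at hx
      have hs : ((X ^ p ^ e - X : (ZMod p)[X]).map
          (algebraMap (ZMod p) (GaloisField p e))).Splits :=
        SplittingField.splits (X ^ p ^ e - X : (ZMod p)[X])
      rw [Polynomial.map_sub, Polynomial.map_pow, Polynomial.map_X] at hs
      exact hs.mem_range_of_isRoot (FiniteField.X_pow_card_pow_sub_X_ne_zero _ he hp1)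
        (i := (ι : GaloisField p e →+* AlgebraicClosure (ZMod p))) (x := x) (by
          simp [IsRoot, hx])
  rw [← h]
  exact ⟨RingHom.rangeRestrictFieldEquiv _⟩

end base

end FFP


open FirstOrder

attribute [local instance] FirstOrder.Ring.compatibleRingOfRing

/-- Theorem 3.6 (non-effective content): for a sentence `θ` in the language of rings and a
prime `p`, there exist `N > 0` and `B ≥ 1` such that for all `e ≥ B`, `θ` holds in the field
with `p^e` elements iff it holds in the field with `p^(e+N)` elements. -/
theorem stmt_6 (θ : Language.ring.Sentence) (p : ℕ) [Fact p.Prime] :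
    ∃ N : ℕ, 0 < N ∧ ∃ B : ℕ, 1 ≤ B ∧ ∀ e : ℕ, B ≤ e →
      (GaloisField p e ⊨ θ ↔ GaloisField p (e + N) ⊨ θ) := by
  by_contra hcon
  push Not at hcon
  have h1 : ∀ k : ℕ, ∃ e, k + 1 ≤ e ∧
      ¬ (GaloisField p e ⊨ θ ↔ GaloisField p (e + k.factorial) ⊨ θ) := by
    intro k
    obtain ⟨e, he, h⟩ := hcon k.factorial k.factorial_pos (k + 1) (by omega)
    exact ⟨e, he, by tauto⟩
  choose e he hne using h1
  let e' : ℕ → ℕ := fun k => e k + k.factorial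
  have hg : ∀ n, n ≠ 0 →
      (GaloisField p n ⊨ θ ↔ FFP.Fix (AlgebraicClosure (ZMod p)) p n ⊨ θ) := by
    intro n hn
    obtain ⟨i⟩ := FFP.galois_equiv p n hn
    exact Language.StrongHomClass.realize_sentence (Ring.languageEquivEquivRingEquiv.symm i) θ
  have hne' : ∀ k, ¬ (FFP.Fix (AlgebraicClosure (ZMod p)) p (e k) ⊨ θ ↔
      FFP.Fix (AlgebraicClosure (ZMod p)) p (e' k) ⊨ θ) := by
    intro k
    have := he k
    rw [← hg _ (by omega), ← hg _ (by simp only [e']; omega)]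
    exact hne k
  have hle : ∀ n, ∀ᶠ k in (Filter.hyperfilter ℕ : Filter ℕ), n ≤ e k := fun n => by
    filter_upwards [Nat.hyperfilter_le_atTop (Filter.eventually_ge_atTop n)] with k hk
    have := he k
    omega
  have hle' : ∀ n, ∀ᶠ k in (Filter.hyperfilter ℕ : Filter ℕ), n ≤ e' k := fun n =>
    (hle n).mono fun k hk => hk.trans (Nat.le_add_right _ _)
  obtain ⟨P⟩ := FFP.base_PI p e e' fun _ => rfl
  have t1 := FFP.transfer_sentence p e e' hle hle' P θ
  have t2 := FFP.transfer_sentence p e' e hle' hle P.symm θ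
  by_cases hc : ∀ᶠ k in (Filter.hyperfilter ℕ : Filter ℕ),
      FFP.Fix (AlgebraicClosure (ZMod p)) p (e k) ⊨ θ
  · obtain ⟨k, h2, h3⟩ := (hc.and (t1 hc)).exists
    exact hne' k ⟨fun _ => h3, fun _ => h2⟩
  · have hc' := hc
    rw [← Ultrafilter.eventually_not] at hc'
    apply hc
    apply t2
    filter_upwards [hc'] with k hk
    by_contra h3
    exact hne' k ⟨fun h => absurd h hk, fun h => absurd h h3⟩
end

section
/- Let F be a field in which −1 ≠ 1, and let q and m be natural numbers with q ≡ 3 (mod 8) and 4 ∣ m. Then there is no element μ ∈ F such that μ^{q+1} = 1 and μ^m = −1. -/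
/-- Key computation in Proposition 6.1(iv): if `char F ≠ 2`, `q ≡ 3 (mod 8)` and `4 ∣ m`,
then there is no `μ ∈ F` with `μ^(q+1) = 1` and `μ^m = −1`. -/
theorem stmt_9 (F : Type) [Field F] (hF : (-1 : F) ≠ 1) (q m : ℕ)
    (hq : q % 8 = 3) (hm : 4 ∣ m) :
    ¬ ∃ μ : F, μ ^ (q + 1) = 1 ∧ μ ^ m = -1 := by
  rintro ⟨μ, h1, h2⟩
  obtain ⟨k, rfl⟩ := hm
  obtain ⟨j, hj⟩ : ∃ j, q + 1 = 4 * (2 * j + 1) := ⟨q / 8, by omega⟩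
  apply hF
  have hodd : (-1 : F) ^ (2 * j + 1) = -1 := Odd.neg_one_pow ⟨j, rfl⟩
  calc (-1 : F) = (μ ^ (4 * k)) ^ (2 * j + 1) := by rw [h2, hodd]
    _ = (μ ^ (q + 1)) ^ k := by
      rw [hj, ← pow_mul, ← pow_mul]
      congr 1
      ring
    _ = 1 := by rw [h1, one_pow]
end
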